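/- Let 𝕋² be the torus with periods L₁, L₂ > 0, let a₁, a₂ : ℝ → ℝ be continuous with a_j being L_j-periodic, with fluxes α_j = (1/(2π))∫₀^{L_j} a_j(x)dx ∉ ℤ, and let A(x) = (a₁(x₁), a₂(x₂)). Let K(α) = min(K₁(α), K₂(α)), where K₁(α) = k(α)² with k(α) = 1/|sin(2πα)| for α mod 1 ∈ (0,1/4)∪(3/4,1) and k(α) = 1 for α mod 1 ∈ [1/4,3/4], and K₂(α) = (5/(3√3π))·[sup_{b≥0} b^{5/3} Σ_{k∈ℤ}(|k+α|³+b)^{−2}]². Then for every family ψ₁,…,ψ_N ∈ H¹(𝕋²) orthonormal in L²(𝕋²), with ρ(x) = Σ_{n=1}^N |ψ_n(x)|², one has ∫_{𝕋²} ρ(x)² dx ≤ (π/6) √(K(α₁)K(α₂)) · Σ_{n=1}^N ∫_{𝕋²} |i∇ψ_n(x) − A(x)ψ_n(x)|²_{ℂ²} dx. -/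

import Mathlib

open MeasureTheory Real Filter

/-- The constant `k(α)` from (K1): `1/|sin(2πα)|` when `α mod 1 ∈ (0,1/4)∪(3/4,1)`,
and `1` when `α mod 1 ∈ [1/4,3/4]`. -/
noncomputable def kConst (α : ℝ) : ℝ :=
  if 1/4 ≤ Int.fract α ∧ Int.fract α ≤ 3/4 then 1
  else 1 / |Real.sin (2 * Real.pi * α)|

/-- `F(b,α) = b^{5/3} Σ_{k∈ℤ} (|k+α|³+b)^{-2}`. -/
noncomputable def Fsum (α b : ℝ) : ℝ :=
  b ^ ((5:ℝ)/3) * ∑' k : ℤ, ((|(k : ℝ) + α| ^ 3 + b) ^ 2)⁻¹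

/-- `sup_{b ≥ 0} F(b,α)`. -/
noncomputable def supF (α : ℝ) : ℝ := ⨆ b : {x : ℝ // 0 ≤ x}, Fsum α b.1

/-- The constant `K₂(α)`. -/
noncomputable def K2 (α : ℝ) : ℝ :=
  5 / (3 * Real.sqrt 3 * Real.pi) * (supF α) ^ 2

/-- `K(α) = min(K₁(α), K₂(α))` with `K₁(α) = k(α)²`. -/
noncomputable def Kmin (α : ℝ) : ℝ := min ((kConst α) ^ 2) (K2 α)

/-- The magnetic momentum operator `(i ∂_{x_j} - a_j(x_j))` acting on functions on `ℝ^d`. -/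
noncomputable def magOp {d : ℕ} (a : Fin d → ℝ → ℝ) (j : Fin d)
    (f : (Fin d → ℝ) → ℂ) (x : Fin d → ℝ) : ℂ :=
  Complex.I * fderiv ℝ f x (Pi.single j 1) - (a j (x j) : ℂ) * f x



lemma swap_cont {E : Type*} [NormedAddCommGroup E] [NormedSpace ℝ E] (F : ℝ → ℝ → E)
    (hF : Continuous (fun p : ℝ × ℝ => F p.1 p.2)) (a b c d : ℝ) :
    ∫ x in a..b, ∫ y in c..d, F x y = ∫ y in c..d, ∫ x in a..b, F x y := by
  apply MeasureTheory.intervalIntegral_intervalIntegral_swap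
  have h : IntegrableOn (Function.uncurry F) (Set.uIcc a b ×ˢ Set.uIcc c d) (volume.prod volume) := by
    apply ContinuousOn.integrableOn_compact (isCompact_uIcc.prod isCompact_uIcc)
    exact hF.continuousOn
  rw [← Measure.volume_eq_prod] at h
  exact h.mono_set (Set.prod_mono Set.uIoc_subset_uIcc Set.uIoc_subset_uIcc)

lemma cont_int {X E : Type*} [TopologicalSpace X] [NormedAddCommGroup E] [NormedSpace ℝ E]
    (F : X → ℝ → E)
    (hF : Continuous (fun p : X × ℝ => F p.1 p.2)) (a b : ℝ) :
    Continuous (fun x => ∫ y in a..b, F x y) := by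
  have : Continuous (Function.uncurry F) := hF
  apply intervalIntegral.continuous_parametric_intervalIntegral_of_continuous' this

/-- The constant `k(α)` dominates the diagonal Green function. -/
lemma kConst_bound (α : ℝ) (hα : ∀ m : ℤ, α ≠ m) (t : ℝ) :
    Real.sinh t ≤ kConst α * (Real.cosh t - Real.cos (2 * π * α)) := by
  unfold kConst
  have hper : Real.cos (2 * π * α) = Real.cos (2 * π * Int.fract α) := by
    rw [← Real.cos_add_int_mul_two_pi (2 * π * Int.fract α) ⌊α⌋]
    congr 1
    have := Int.fract_add_floor α
    nth_rw 1 [← this]; ring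
  split_ifs with h
  · have hc : Real.cos (2 * π * α) ≤ 0 := by
      rw [hper]
      apply Real.cos_nonpos_of_pi_div_two_le_of_le
      · nlinarith [Real.pi_pos, h.1]
      · nlinarith [Real.pi_pos, h.2]
    have : Real.sinh t ≤ Real.cosh t := (Real.sinh_lt_cosh t).le
    linarith
  · have hs : Real.sin (2 * π * α) ≠ 0 := by
      intro h0
      obtain ⟨n, hn⟩ := Real.sin_eq_zero_iff.1 h0
      have hn2 : (n : ℝ) = 2 * α := by
        have : π * ((n : ℝ) - 2 * α) = 0 := by linarith
        rcases mul_eq_zero.1 this with h | h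
        · exact absurd h Real.pi_ne_zero
        · linarith
      rcases Int.even_or_odd' n with ⟨m, hm | hm⟩
      · apply hα m
        rw [hm] at hn2; push_cast at hn2; linarith
      · apply h
        rw [hm] at hn2; push_cast at hn2
        have : α = 1/2 + (m : ℝ) := by linarith
        rw [this, Int.fract_add_intCast]
        have : Int.fract (1/2 : ℝ) = 1/2 := by
          rw [Int.fract_eq_self]; norm_num
        rw [this]; norm_num
    have hpos : 0 < |Real.sin (2 * π * α)| := abs_pos.2 hs
    rw [one_div, inv_mul_eq_div, le_div_iff₀ hpos]
    have h1 : 1 ≤ Real.cosh t := Real.one_le_cosh t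
    have h2 : Real.cos (2 * π * α) ≤ 1 := Real.cos_le_one _
    refine le_trans (le_abs_self _) (abs_le_of_sq_le_sq ?_ (by linarith))
    rw [mul_pow, sq_abs, Real.sin_sq, Real.sinh_sq]
    nlinarith [sq_nonneg (Real.cos (2 * π * α) * Real.cosh t - 1)]

/-- Lower bound of the quadratic form on quasi-periodic functions. -/
lemma k1_form (L μ θ : ℝ) (hL : 0 < L) (hμ : 0 < μ) (φ φ' : ℝ → ℂ)
    (hd : ∀ x, HasDerivAt φ (φ' x) x) (hc' : Continuous φ')
    (hq : φ L = Complex.exp (θ * Complex.I) * φ 0) :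
    2 * μ * (Real.cosh (μ * L) - Real.cos θ) * ‖φ 0‖ ^ 2 ≤
      Real.sinh (μ * L) * ∫ x in (0:ℝ)..L, (‖φ' x‖ ^ 2 + μ ^ 2 * ‖φ x‖ ^ 2) := by
  have hc : Continuous φ := continuous_iff_continuousAt.2 fun x => (hd x).continuousAt
  have hS : 0 < Real.sinh (μ * L) := Real.sinh_pos_iff.2 (by positivity)
  set S := Real.sinh (μ * L) with hSdef
  set e := Complex.exp (θ * Complex.I) with he
  -- the comparison function
  set w : ℝ → ℂ := fun x => φ 0 / S * ((Real.sinh (μ * (L - x)) : ℝ) + e * (Real.sinh (μ * x) : ℝ)) with hw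
  set w' : ℝ → ℂ := fun x => φ 0 / S * (μ * (-(Real.cosh (μ * (L - x)) : ℝ) + e * (Real.cosh (μ * x) : ℝ))) with hw'
  have hwd : ∀ x, HasDerivAt w (w' x) x := by
    intro x
    have h1 : HasDerivAt (fun x => Real.sinh (μ * (L - x))) (Real.cosh (μ * (L - x)) * (μ * (0 - 1))) x :=
      ((((hasDerivAt_const x L).sub (hasDerivAt_id x)).const_mul μ)).sinh
    have h2 : HasDerivAt (fun x => Real.sinh (μ * x)) (Real.cosh (μ * x) * (μ * 1)) x :=
      ((hasDerivAt_id x).const_mul μ).sinh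
    have := ((h1.ofReal_comp).add ((h2.ofReal_comp).const_mul e)).const_mul (φ 0 / S)
    refine this.congr_deriv ?_
    simp only [hw']; push_cast; ring
  have hwd' : ∀ x, HasDerivAt w' (μ ^ 2 * w x) x := by
    intro x
    have h1 : HasDerivAt (fun x => Real.cosh (μ * (L - x))) (Real.sinh (μ * (L - x)) * (μ * (0 - 1))) x :=
      ((((hasDerivAt_const x L).sub (hasDerivAt_id x)).const_mul μ)).cosh
    have h2 : HasDerivAt (fun x => Real.cosh (μ * x)) (Real.sinh (μ * x) * (μ * 1)) x :=
      ((hasDerivAt_id x).const_mul μ).cosh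
    have := (((h1.ofReal_comp).neg.add ((h2.ofReal_comp).const_mul e)).const_mul (μ : ℂ)).const_mul (φ 0 / S)
    refine this.congr_deriv ?_
    simp only [hw]; push_cast; ring
  set G : ℝ → ℂ := fun x => 2 * (φ x * (starRingEnd ℂ) (w' x)) - w x * (starRingEnd ℂ) (w' x) with hG
  set G' : ℝ → ℂ := fun x => 2 * (φ' x * (starRingEnd ℂ) (w' x) + φ x * (starRingEnd ℂ) (μ ^ 2 * w x))
    - (w' x * (starRingEnd ℂ) (w' x) + w x * (starRingEnd ℂ) (μ ^ 2 * w x)) with hG'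
  have hGd : ∀ x, HasDerivAt G (G' x) x := by
    intro x
    have hcj : HasDerivAt (fun x => (starRingEnd ℂ) (w' x)) ((starRingEnd ℂ) (μ ^ 2 * w x)) x := by
      have := (hwd' x).star
      simpa using this
    exact (((hd x).mul hcj).const_mul 2).sub ((hwd x).mul hcj)
  have hcw : Continuous w := continuous_iff_continuousAt.2 fun x => (hwd x).continuousAt
  have hcw' : Continuous w' := continuous_iff_continuousAt.2 fun x => (hwd' x).continuousAt
  have hcG' : Continuous G' := by
    have h1 := Complex.continuous_conj.comp hcw
    have h2 := Complex.continuous_conj.comp hcw'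
    simp only [hG', map_mul]
    simp only [Function.comp_def] at h1 h2
    fun_prop
  have hftc : ∫ x in (0:ℝ)..L, (G' x).re = (G L).re - (G 0).re := by
    apply intervalIntegral.integral_eq_sub_of_hasDerivAt
    · intro x _
      exact (Complex.reCLM.hasFDerivAt.comp_hasDerivAt x (hGd x))
    · exact (Complex.continuous_re.comp hcG').intervalIntegrable _ _
  have hle : ∫ x in (0:ℝ)..L, (G' x).re ≤ ∫ x in (0:ℝ)..L, (‖φ' x‖ ^ 2 + μ ^ 2 * ‖φ x‖ ^ 2) := by
    apply intervalIntegral.integral_mono_on hL.le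
    · exact (Complex.continuous_re.comp hcG').intervalIntegrable _ _
    · apply Continuous.intervalIntegrable; fun_prop
    · intro x _
      simp only [hG', Complex.sq_norm, Complex.normSq_apply]
      simp [Complex.mul_re, Complex.mul_im, pow_two]
      nlinarith [sq_nonneg ((φ' x).re - (w' x).re), sq_nonneg ((φ' x).im - (w' x).im),
        sq_nonneg (μ * ((φ x).re - (w x).re)), sq_nonneg (μ * ((φ x).im - (w x).im))]
  have hSC : (S : ℂ) ≠ 0 := by exact_mod_cast hS.ne'
  have hw0 : w 0 = φ 0 := by
    simp [hw]
    rw [← Complex.ofReal_mul, ← Complex.ofReal_sinh, ← hSdef]; field_simp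
  have hwL : w L = φ L := by
    rw [hq]; simp [hw]
    rw [← Complex.ofReal_mul, ← Complex.ofReal_sinh, ← hSdef]; field_simp
  have hval : S * ((G L).re - (G 0).re) = 2 * μ * (Real.cosh (μ * L) - Real.cos θ) * ‖φ 0‖ ^ 2 := by
    have e1 : G L = e * φ 0 * (starRingEnd ℂ) (φ 0 / S * (μ * (-1 + e * (Real.cosh (μ * L) : ℝ)))) := by
      simp only [hG, hwL, hq]; simp [hw']; ring
    have e2 : G 0 = φ 0 * (starRingEnd ℂ) (φ 0 / S * (μ * (-(Real.cosh (μ * L) : ℝ) + e))) := by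
      simp only [hG, hw0]; simp [hw']; ring
    have hee : e * (starRingEnd ℂ) e = 1 := by
      rw [Complex.mul_conj, Complex.normSq_eq_norm_sq, he, Complex.norm_exp_ofReal_mul_I]; simp
    have hpp : φ 0 * (starRingEnd ℂ) (φ 0) = (‖φ 0‖ ^ 2 : ℝ) := by
      rw [Complex.mul_conj, Complex.normSq_eq_norm_sq]
    have e3 : (S : ℂ) * (G L - G 0) = μ * (‖φ 0‖ ^ 2 : ℝ) * (2 * (Real.cosh (μ * L) : ℝ) - (e + (starRingEnd ℂ) e)) := by
      rw [e1, e2, ← hpp]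
      simp only [map_mul, map_div₀, map_add, map_neg, map_one, Complex.conj_ofReal]
      field_simp
      linear_combination (φ 0 * (starRingEnd ℂ) (φ 0) * μ * (Real.cosh (μ * L) : ℝ)) * hee
    have e4 := congrArg Complex.re e3
    rw [Complex.re_ofReal_mul, Complex.sub_re] at e4
    rw [e4, Complex.add_conj, ← Complex.ofReal_mul, Complex.re_ofReal_mul, he, Complex.exp_ofReal_mul_I_re]
    rw [← Complex.ofReal_ofNat, ← Complex.ofReal_mul, ← Complex.ofReal_sub, Complex.ofReal_re]
    ring
  rw [← hval, ← hftc]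
  exact mul_le_mul_of_nonneg_left hle hS.le

lemma k1_pointwise (L μ α : ℝ) (hL : 0 < L) (hμ : 0 < μ) (hα : ∀ m : ℤ, α ≠ m) (φ φ' : ℝ → ℂ)
    (hd : ∀ x, HasDerivAt φ (φ' x) x) (hc' : Continuous φ')
    (hq : ∀ x, φ (x + L) = Complex.exp ((2 * π * α : ℝ) * Complex.I) * φ x) (x : ℝ) :
    2 * μ * ‖φ x‖ ^ 2 ≤
      kConst α * ∫ x in (0:ℝ)..L, (‖φ' x‖ ^ 2 + μ ^ 2 * ‖φ x‖ ^ 2) := by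
  have hq' : ∀ x, φ' (x + L) = Complex.exp ((2 * π * α : ℝ) * Complex.I) * φ' x := by
    intro x
    have h1 : HasDerivAt (fun x => φ (x + L)) (φ' (x + L)) x := (hd (x + L)).comp_add_const x L
    have h2 : HasDerivAt (fun x => φ (x + L)) (Complex.exp ((2 * π * α : ℝ) * Complex.I) * φ' x) x := by
      have := (hd x).const_mul (Complex.exp ((2 * π * α : ℝ) * Complex.I))
      exact this.congr_of_eventuallyEq (Eventually.of_forall hq)
    exact h1.unique h2
  have hper : Function.Periodic (fun x => ‖φ' x‖ ^ 2 + μ ^ 2 * ‖φ x‖ ^ 2) L := by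
    intro x
    simp only [hq, hq', norm_mul, Complex.norm_exp_ofReal_mul_I, one_mul]
  have h := k1_form L μ (2 * π * α) hL hμ (fun t => φ (t + x)) (fun t => φ' (t + x))
    (fun t => (hd (t + x)).comp_add_const t x) (by fun_prop) (by rw [add_comm, hq]; simp)
  rw [intervalIntegral.integral_comp_add_right (fun x => ‖φ' x‖ ^ 2 + μ ^ 2 * ‖φ x‖ ^ 2), zero_add,
    add_comm L x, hper.intervalIntegral_add_eq x 0, zero_add] at h
  have hk := kConst_bound α hα (μ * L)
  have hS : 0 < Real.sinh (μ * L) := Real.sinh_pos_iff.2 (by positivity)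
  set I := ∫ x in (0:ℝ)..L, (‖φ' x‖ ^ 2 + μ ^ 2 * ‖φ x‖ ^ 2)
  have hD : 0 < Real.cosh (μ * L) - Real.cos (2 * π * α) := by
    have h1 : 1 < Real.cosh (μ * L) := Real.one_lt_cosh.2 (by positivity)
    linarith [Real.cos_le_one (2 * π * α)]
  have hI : 0 ≤ I := intervalIntegral.integral_nonneg hL.le fun x _ => by positivity
  have := h.trans (mul_le_mul_of_nonneg_right hk hI)
  nlinarith


/-- Change of basis by a matrix. -/
noncomputable def rot {ι : Type} [Fintype ι] (V : Matrix ι ι ℂ) (z : ι → ℂ) (i : ι) : ℂ :=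
  ∑ n, (starRingEnd ℂ) (V n i) * z n

/-- The Gram matrix of the fibres. -/
noncomputable def gramM {ι : Type} (M : ℝ) (v : ι → ℝ → ℝ → ℂ) (x : ℝ) : Matrix ι ι ℂ :=
  fun n m => ∫ y in (0:ℝ)..M, v n x y * (starRingEnd ℂ) (v m x y)

lemma rot_mul_conj {ι : Type} [Fintype ι] (V : Matrix ι ι ℂ) (z z' : ι → ℂ) (i j : ι) :
    rot V z i * (starRingEnd ℂ) (rot V z' j) =
      ∑ n, ∑ m, (starRingEnd ℂ) (V n i) * V m j * (z n * (starRingEnd ℂ) (z' m)) := by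
  unfold rot
  rw [map_sum, Finset.sum_mul_sum]
  refine Finset.sum_congr rfl fun n _ => Finset.sum_congr rfl fun m _ => ?_
  simp only [map_mul, Complex.conj_conj]; ring

lemma rot_norm {ι : Type} [Fintype ι] [DecidableEq ι] (V : Matrix ι ι ℂ)
    (hV : V * V.conjTranspose = 1) (z : ι → ℂ) :
    ∑ i, ‖rot V z i‖ ^ 2 = ∑ n, ‖z n‖ ^ 2 := by
  have h : ∑ i, rot V z i * (starRingEnd ℂ) (rot V z i) = ∑ n, z n * (starRingEnd ℂ) (z n) := by
    simp_rw [rot_mul_conj]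
    rw [Finset.sum_comm]
    refine Finset.sum_congr rfl fun n _ => ?_
    rw [Finset.sum_comm]
    have : ∀ m, ∑ i, (starRingEnd ℂ) (V n i) * V m i * (z n * (starRingEnd ℂ) (z m)) =
        (if m = n then 1 else 0) * (z n * (starRingEnd ℂ) (z m)) := by
      intro m
      have h1 := congrFun (congrFun hV m) n
      rw [Matrix.mul_apply, Matrix.one_apply] at h1
      rw [← h1, Finset.sum_mul]
      refine Finset.sum_congr rfl fun i _ => ?_
      simp only [Matrix.conjTranspose_apply, Complex.star_def]; ring
    simp [this]
  have h2 : ∀ z : ℂ, z * (starRingEnd ℂ) z = ((‖z‖ ^ 2 : ℝ) : ℂ) := fun z => by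
    rw [Complex.mul_conj, Complex.normSq_eq_norm_sq]
  simp_rw [h2] at h
  exact_mod_cast h

lemma herm_diag {ι : Type} [Fintype ι] [DecidableEq ι] (G : Matrix ι ι ℂ) (hG : G.IsHermitian) :
    ∃ (V : Matrix ι ι ℂ) (lam : ι → ℝ), V * V.conjTranspose = 1 ∧ V.conjTranspose * V = 1 ∧
      G = V * Matrix.diagonal (fun i => (lam i : ℂ)) * V.conjTranspose ∧
      V.conjTranspose * G * V = Matrix.diagonal (fun i => (lam i : ℂ)) ∧
      (G ^ 3).trace.re = ∑ i, lam i ^ 3 := by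
  set V : Matrix ι ι ℂ := (hG.eigenvectorUnitary : Matrix ι ι ℂ) with hV
  have h1 : V * V.conjTranspose = 1 := Unitary.coe_mul_star_self hG.eigenvectorUnitary
  have h2 : V.conjTranspose * V = 1 := Unitary.coe_star_mul_self hG.eigenvectorUnitary
  have h3 : G = V * Matrix.diagonal (fun i => (hG.eigenvalues i : ℂ)) * V.conjTranspose := by
    have := hG.spectral_theorem
    rw [Unitary.conjStarAlgAut_apply] at this
    exact this
  refine ⟨V, hG.eigenvalues, h1, h2, h3, ?_, ?_⟩
  · conv_lhs => rw [h3]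
    simp only [Matrix.mul_assoc, h2, Matrix.mul_one]
    rw [← Matrix.mul_assoc, h2, Matrix.one_mul]
  · set D : Matrix ι ι ℂ := Matrix.diagonal (fun i => (hG.eigenvalues i : ℂ)) with hD
    have h4 : G ^ 3 = V * (D ^ 3) * V.conjTranspose := by
      have e : G ^ 3 = (V * D * V.conjTranspose) * (V * D * V.conjTranspose) * (V * D * V.conjTranspose) := by
        rw [← h3]; noncomm_ring
      rw [e]
      calc _ = V * D * (V.conjTranspose * V) * D * (V.conjTranspose * V) * D * V.conjTranspose := by
            noncomm_ring
        _ = _ := by rw [h2]; noncomm_ring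
    rw [h4, Matrix.trace_mul_cycle, h2, Matrix.one_mul, hD, Matrix.diagonal_pow, Matrix.trace_diagonal,
      Complex.re_sum]
    refine Finset.sum_congr rfl fun i _ => ?_
    simp only [Pi.pow_apply]
    rw [← Complex.ofReal_pow, Complex.ofReal_re]

lemma interv_conj {f : ℝ → ℂ} {a b : ℝ} :
    ∫ y in a..b, (starRingEnd ℂ) (f y) = (starRingEnd ℂ) (∫ y in a..b, f y) := by
  simp only [intervalIntegral, integral_conj, map_sub]

lemma gramM_herm {ι : Type} (M : ℝ) (v : ι → ℝ → ℝ → ℂ) (x : ℝ) : (gramM M v x).IsHermitian := by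
  ext n m
  rw [Matrix.conjTranspose_apply]
  unfold gramM
  rw [Complex.star_def, ← interv_conj]
  congr 1; ext y
  simp [mul_comm]

lemma gramM_cont {ι : Type} (M : ℝ) (v : ι → ℝ → ℝ → ℂ)
    (hv : ∀ n, Continuous (fun p : ℝ × ℝ => v n p.1 p.2)) (n m : ι) :
    Continuous (fun x => gramM M v x n m) := by
  unfold gramM
  apply cont_int
  exact (hv n).mul (Complex.continuous_conj.comp (hv m))

lemma int_rot {ι : Type} [Fintype ι] (V : Matrix ι ι ℂ) (f g : ι → ℝ → ℂ)
    (hf : ∀ n, Continuous (f n)) (hg : ∀ n, Continuous (g n)) (a b : ℝ) (i j : ι) :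
    ∫ y in a..b, rot V (fun n => f n y) i * (starRingEnd ℂ) (rot V (fun n => g n y) j) =
      ∑ n, ∑ m, (starRingEnd ℂ) (V n i) * V m j * ∫ y in a..b, (f n y * (starRingEnd ℂ) (g m y)) := by
  simp_rw [rot_mul_conj]
  have hc : ∀ n m, Continuous fun y => (f n y * (starRingEnd ℂ) (g m y)) := fun n m =>
    (hf n).mul (Complex.continuous_conj.comp (hg m))
  rw [intervalIntegral.integral_finsetSum]
  · refine Finset.sum_congr rfl fun n _ => ?_
    rw [intervalIntegral.integral_finsetSum]
    · simp_rw [intervalIntegral.integral_const_mul]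
    · intro m _
      exact ((hc n m).const_mul _).intervalIntegrable _ _
  · intro n _
    exact (continuous_finsetSum _ fun m _ => (hc n m).const_mul _).intervalIntegrable _ _

lemma int_int_rot {ι : Type} [Fintype ι] (V : Matrix ι ι ℂ) (f g : ι → ℝ → ℝ → ℂ)
    (hf : ∀ n, Continuous (fun p : ℝ × ℝ => f n p.1 p.2))
    (hg : ∀ n, Continuous (fun p : ℝ × ℝ => g n p.1 p.2)) (a b c d : ℝ) (i j : ι) :
    ∫ x in a..b, ∫ y in c..d,
      rot V (fun n => f n x y) i * (starRingEnd ℂ) (rot V (fun n => g n x y) j) =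
      ∑ n, ∑ m, (starRingEnd ℂ) (V n i) * V m j *
        ∫ x in a..b, ∫ y in c..d, (f n x y * (starRingEnd ℂ) (g m x y)) := by
  have h1 : ∀ x, ∫ y in c..d,
      rot V (fun n => f n x y) i * (starRingEnd ℂ) (rot V (fun n => g n x y) j) =
      ∑ n, ∑ m, (starRingEnd ℂ) (V n i) * V m j * ∫ y in c..d, (f n x y * (starRingEnd ℂ) (g m x y)) :=
    fun x => int_rot V (fun n => f n x) (fun n => g n x) (fun n => by have := hf n; fun_prop)
      (fun n => by have := hg n; fun_prop) c d i j
  simp_rw [h1]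
  have hc : ∀ n m, Continuous fun x => ∫ y in c..d, (f n x y * (starRingEnd ℂ) (g m x y)) := fun n m => by
    apply cont_int
    exact (hf n).mul (Complex.continuous_conj.comp (hg m))
  rw [intervalIntegral.integral_finsetSum]
  · refine Finset.sum_congr rfl fun n _ => ?_
    rw [intervalIntegral.integral_finsetSum]
    · simp_rw [intervalIntegral.integral_const_mul]
    · intro m _
      exact ((hc n m).const_mul _).intervalIntegrable _ _
  · intro n _
    exact (continuous_finsetSum _ fun m _ => (hc n m).const_mul _).intervalIntegrable _ _

lemma mul_conj_norm (z : ℂ) : z * (starRingEnd ℂ) z = ((‖z‖ ^ 2 : ℝ) : ℂ) := by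
  rw [Complex.mul_conj, Complex.normSq_eq_norm_sq]

lemma rot_cont {ι X : Type} [Fintype ι] [TopologicalSpace X] (V : Matrix ι ι ℂ) (f : ι → X → ℂ)
    (hf : ∀ n, Continuous (f n)) (i : ι) : Continuous (fun x => rot V (fun n => f n x) i) := by
  unfold rot
  exact continuous_finsetSum _ fun n _ => (hf n).const_mul _

/-- Diagonalisation of the fibre Gram matrix. -/
lemma gram_diag {ι : Type} [Fintype ι] [DecidableEq ι] (M : ℝ) (hM : 0 < M) (v : ι → ℝ → ℝ → ℂ)
    (hv : ∀ n, Continuous (fun p : ℝ × ℝ => v n p.1 p.2)) (x : ℝ) :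
    ∃ (V : Matrix ι ι ℂ) (lam : ι → ℝ), V * V.conjTranspose = 1 ∧ V.conjTranspose * V = 1 ∧
      gramM M v x = V * Matrix.diagonal (fun i => (lam i : ℂ)) * V.conjTranspose ∧
      ((gramM M v x) ^ 3).trace.re = ∑ i, lam i ^ 3 ∧
      (∀ i j, ∫ y in (0:ℝ)..M, rot V (fun n => v n x y) i * (starRingEnd ℂ) (rot V (fun n => v n x y) j)
        = if i = j then (lam i : ℂ) else 0) ∧
      (∀ i, ∫ y in (0:ℝ)..M, ‖rot V (fun n => v n x y) i‖ ^ 2 = lam i) ∧ (∀ i, 0 ≤ lam i) := by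
  obtain ⟨V, lam, h1, h2, h3, h4, h5⟩ := herm_diag _ (gramM_herm M v x)
  have hA : ∀ i j, ∫ y in (0:ℝ)..M, rot V (fun n => v n x y) i * (starRingEnd ℂ) (rot V (fun n => v n x y) j)
        = if i = j then (lam i : ℂ) else 0 := by
    intro i j
    have h := int_rot V (fun n => v n x) (fun n => v n x) (fun n => by have := hv n; fun_prop)
      (fun n => by have := hv n; fun_prop) 0 M i j
    rw [h]
    have h6 := congrFun (congrFun h4 i) j
    rw [Matrix.diagonal_apply] at h6
    rw [← h6, Matrix.mul_apply]
    simp_rw [Matrix.mul_apply, Matrix.conjTranspose_apply, Finset.sum_mul]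
    rw [Finset.sum_comm]
    refine Finset.sum_congr rfl fun n _ => Finset.sum_congr rfl fun m _ => ?_
    unfold gramM
    simp only [Complex.star_def]; ring
  have hB : ∀ i, ∫ y in (0:ℝ)..M, ‖rot V (fun n => v n x y) i‖ ^ 2 = lam i := by
    intro i
    have := hA i i
    simp only [mul_conj_norm, if_true] at this
    rw [intervalIntegral.integral_ofReal] at this
    exact_mod_cast this
  exact ⟨V, lam, h1, h2, h3, h5, hA, hB, fun i => by
    rw [← hB]; exact intervalIntegral.integral_nonneg hM.le fun y _ => by positivity⟩

/-- Matrix-valued one-dimensional Lieb–Thirring inequality for quasi-periodic systems. -/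
def LT1D (K α L : ℝ) : Prop :=
  ∀ (ι : Type) [Fintype ι] [DecidableEq ι] (M : ℝ) (_ : 0 < M) (v v' : ι → ℝ → ℝ → ℂ)
    (_ : ∀ n, Continuous (fun p : ℝ × ℝ => v n p.1 p.2))
    (_ : ∀ n, Continuous (fun p : ℝ × ℝ => v' n p.1 p.2))
    (_ : ∀ n x y, HasDerivAt (fun x => v n x y) (v' n x y) x)
    (_ : ∀ n x y, v n (x + L) y = Complex.exp ((2 * π * α : ℝ) * Complex.I) * v n x y)
    (_ : ∀ n m, ∫ x in (0:ℝ)..L, ∫ y in (0:ℝ)..M, v n x y * (starRingEnd ℂ) (v m x y)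
      = if n = m then 1 else 0),
    ∫ x in (0:ℝ)..L, ((gramM M v x) ^ 3).trace.re ≤
      K * ∑ n, ∫ x in (0:ℝ)..L, ∫ y in (0:ℝ)..M, ‖v' n x y‖ ^ 2

lemma rot_orth {ι : Type} [Fintype ι] [DecidableEq ι] (V : Matrix ι ι ℂ)
    (h2 : V.conjTranspose * V = 1) (L M : ℝ) (v : ι → ℝ → ℝ → ℂ)
    (hv : ∀ n, Continuous (fun p : ℝ × ℝ => v n p.1 p.2))
    (ho : ∀ n m, ∫ x in (0:ℝ)..L, ∫ y in (0:ℝ)..M, v n x y * (starRingEnd ℂ) (v m x y)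
      = if n = m then 1 else 0) (i : ι) :
    ∫ x in (0:ℝ)..L, ∫ y in (0:ℝ)..M, ‖rot V (fun n => v n x y) i‖ ^ 2 = 1 := by
  have h := int_int_rot V v v hv hv 0 L 0 M i i
  simp_rw [mul_conj_norm, intervalIntegral.integral_ofReal, ho] at h
  have h3 := congrFun (congrFun h2 i) i
  rw [Matrix.mul_apply, Matrix.one_apply_eq] at h3
  have : ∑ n, ∑ m, (starRingEnd ℂ) (V n i) * V m i * (if n = m then (1:ℂ) else 0) = 1 := by
    refine Eq.trans ?_ h3
    simp [Matrix.conjTranspose_apply]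
  rw [this] at h
  exact_mod_cast h

lemma trace_gram_cont {ι : Type} [Fintype ι] [DecidableEq ι] (M : ℝ) (v : ι → ℝ → ℝ → ℂ)
    (hv : ∀ n, Continuous (fun p : ℝ × ℝ => v n p.1 p.2)) :
    Continuous (fun x => ((gramM M v x) ^ 3).trace.re) := by
  have hG : Continuous (fun x => gramM M v x) :=
    continuous_pi fun n => continuous_pi fun m => gramM_cont M v hv n m
  exact Complex.continuous_re.comp (Continuous.matrix_trace (hG.pow 3))

lemma kConst_nonneg (α : ℝ) : 0 ≤ kConst α := by
  unfold kConst; split_ifs <;> positivity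

theorem LT1D_K1 (α L : ℝ) (hL : 0 < L) (hα : ∀ m : ℤ, α ≠ m) : LT1D (kConst α ^ 2) α L := by
  intro ι _ _ M hM v v' hv hv' hd hq ho
  set k := kConst α with hk
  have hk0 : 0 ≤ k := kConst_nonneg α
  set D : ι → ι → ℂ := fun n m => ∫ x in (0:ℝ)..L, ∫ y in (0:ℝ)..M, v' n x y * (starRingEnd ℂ) (v' m x y) with hD
  have hpt : ∀ x, ((gramM M v x) ^ 3).trace.re ≤ k ^ 2 * (∑ n, ∑ m, D n m * gramM M v x m n).re := by
    intro x
    obtain ⟨V, lam, h1, h2, h3, h5, hA, hB, h0⟩ := gram_diag M hM v hv x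
    rw [h5]
    set d : ι → ℝ := fun i => ∫ x in (0:ℝ)..L, ∫ y in (0:ℝ)..M, ‖rot V (fun n => v' n x y) i‖ ^ 2 with hd'
    have hcw : ∀ i, Continuous (fun p : ℝ × ℝ => rot V (fun n => v n p.1 p.2) i) := fun i =>
      rot_cont V (fun n (p : ℝ × ℝ) => v n p.1 p.2) hv i
    have hcw' : ∀ i, Continuous (fun p : ℝ × ℝ => rot V (fun n => v' n p.1 p.2) i) := fun i =>
      rot_cont V (fun n (p : ℝ × ℝ) => v' n p.1 p.2) hv' i
    have hkey : ∀ i, ∀ μ : ℝ, 0 < μ → 2 * μ * lam i ≤ k * (d i + μ ^ 2) := by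
      intro i μ hμ
      have hy : ∀ y, 2 * μ * ‖rot V (fun n => v n x y) i‖ ^ 2 ≤ k * ∫ x in (0:ℝ)..L,
          (‖rot V (fun n => v' n x y) i‖ ^ 2 + μ ^ 2 * ‖rot V (fun n => v n x y) i‖ ^ 2) := by
        intro y
        apply k1_pointwise L μ α hL hμ hα (fun x => rot V (fun n => v n x y) i)
          (fun x => rot V (fun n => v' n x y) i)
        · intro t
          unfold rot
          exact HasDerivAt.fun_sum fun n _ => (hd n t y).const_mul _
        · have := hcw' i; exact this.comp (Continuous.prodMk_left y)
        · intro t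
          unfold rot
          simp_rw [hq, Finset.mul_sum]
          refine Finset.sum_congr rfl fun n _ => by ring
      have hcs : Continuous (fun p : ℝ × ℝ => ‖rot V (fun n => v' n p.2 p.1) i‖ ^ 2 +
          μ ^ 2 * ‖rot V (fun n => v n p.2 p.1) i‖ ^ 2) := by
        have e1 := (hcw' i).comp continuous_swap
        have e2 := (hcw i).comp continuous_swap
        simp only [Function.comp_def, Prod.fst_swap, Prod.snd_swap] at e1 e2
        fun_prop
      have hIntg := intervalIntegral.integral_mono_on (μ := volume) hM.le
        (f := fun y => 2 * μ * ‖rot V (fun n => v n x y) i‖ ^ 2)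
        (g := fun y => k * ∫ x in (0:ℝ)..L,
          (‖rot V (fun n => v' n x y) i‖ ^ 2 + μ ^ 2 * ‖rot V (fun n => v n x y) i‖ ^ 2))
        (by
          apply Continuous.intervalIntegrable
          have := (hcw i).comp (Continuous.prodMk_right x)
          simp only [Function.comp_def] at this
          fun_prop)
        (by
          apply Continuous.intervalIntegrable
          exact (cont_int (fun y x => (‖rot V (fun n => v' n x y) i‖ ^ 2 + μ ^ 2 * ‖rot V (fun n => v n x y) i‖ ^ 2))
            hcs 0 L).const_mul k)
        (fun y _ => hy y)
      rw [intervalIntegral.integral_const_mul, hB, intervalIntegral.integral_const_mul] at hIntg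
      rw [swap_cont _ hcs] at hIntg
      have hsplit : ∫ x in (0:ℝ)..L, ∫ y in (0:ℝ)..M,
          (‖rot V (fun n => v' n x y) i‖ ^ 2 + μ ^ 2 * ‖rot V (fun n => v n x y) i‖ ^ 2) = d i + μ ^ 2 := by
        have e1 : ∀ x, ∫ y in (0:ℝ)..M,
          (‖rot V (fun n => v' n x y) i‖ ^ 2 + μ ^ 2 * ‖rot V (fun n => v n x y) i‖ ^ 2) =
          (∫ y in (0:ℝ)..M, ‖rot V (fun n => v' n x y) i‖ ^ 2) + μ ^ 2 * ∫ y in (0:ℝ)..M, ‖rot V (fun n => v n x y) i‖ ^ 2 := by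
          intro x
          have c1 := (hcw i).comp (Continuous.prodMk_right x)
          have c2 := (hcw' i).comp (Continuous.prodMk_right x)
          simp only [Function.comp_def] at c1 c2
          rw [intervalIntegral.integral_add, intervalIntegral.integral_const_mul]
          · apply Continuous.intervalIntegrable; fun_prop
          · apply Continuous.intervalIntegrable; fun_prop
        simp_rw [e1]
        rw [intervalIntegral.integral_add, intervalIntegral.integral_const_mul,
          rot_orth V h2 L M v hv ho i, mul_one]
        · exact (cont_int _ ((hcw' i).norm.pow 2) 0 M).intervalIntegrable _ _
        · exact ((cont_int _ ((hcw i).norm.pow 2) 0 M).const_mul _).intervalIntegrable _ _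
      rwa [hsplit] at hIntg
    have hcube : ∀ i, lam i ^ 3 ≤ k ^ 2 * (lam i * d i) := by
      intro i
      rcases (h0 i).eq_or_lt with h | h
      · rw [← h]; simp
      have hkp : 0 < k := by
        rcases hk0.eq_or_lt with h' | h'
        · have := hkey i 1 one_pos
          rw [← h'] at this; linarith
        · exact h'
      have := hkey i (lam i / k) (by positivity)
      have e : k * (d i + (lam i / k) ^ 2) = k * d i + lam i ^ 2 / k := by field_simp
      have e2 : 2 * (lam i / k) * lam i = 2 * (lam i ^ 2 / k) := by ring
      rw [e, e2] at this
      have h7 : lam i ^ 2 / k ≤ k * d i := by linarith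
      rw [div_le_iff₀ hkp] at h7
      nlinarith
    have hsum : (∑ n, ∑ m, D n m * gramM M v x m n) = ((∑ i, lam i * d i : ℝ) : ℂ) := by
      push_cast
      have hdi : ∀ i, (d i : ℂ) = ∑ n, ∑ m, (starRingEnd ℂ) (V n i) * V m i * D n m := by
        intro i
        rw [← int_int_rot V v' v' hv' hv' 0 L 0 M i i]
        simp_rw [mul_conj_norm, intervalIntegral.integral_ofReal]
        rfl
      simp_rw [hdi, Finset.mul_sum]
      symm
      rw [Finset.sum_comm]
      refine Finset.sum_congr rfl fun n _ => ?_
      rw [Finset.sum_comm]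
      refine Finset.sum_congr rfl fun m _ => ?_
      rw [h3, Matrix.mul_apply, Finset.mul_sum]
      refine Finset.sum_congr rfl fun i _ => ?_
      rw [Matrix.mul_diagonal, Matrix.conjTranspose_apply, Complex.star_def]; ring
    rw [hsum, Complex.ofReal_re, Finset.mul_sum]
    exact Finset.sum_le_sum fun i _ => hcube i
  have hcR : Continuous (fun x => (∑ n, ∑ m, D n m * gramM M v x m n)) :=
    continuous_finsetSum _ fun n _ => continuous_finsetSum _ fun m _ =>
      (gramM_cont M v hv m n).const_mul _
  calc _ ≤ ∫ x in (0:ℝ)..L, k ^ 2 * (∑ n, ∑ m, D n m * gramM M v x m n).re := by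
        apply intervalIntegral.integral_mono_on hL.le
        · exact (trace_gram_cont M v hv).intervalIntegrable _ _
        · exact ((Complex.continuous_re.comp hcR).const_mul _).intervalIntegrable _ _
        · exact fun x _ => hpt x
    _ = k ^ 2 * (∫ x in (0:ℝ)..L, (∑ n, ∑ m, D n m * gramM M v x m n)).re := by
        rw [intervalIntegral.integral_const_mul]
        congr 1
        have := Complex.reCLM.intervalIntegral_comp_comm (hcR.intervalIntegrable (μ := volume) 0 L)
        exact this
    _ = _ := by
        congr 1
        rw [intervalIntegral.integral_finsetSum]
        swap
        · intro n _
          exact (continuous_finsetSum _ fun m _ =>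
            (gramM_cont M v hv m n).const_mul _).intervalIntegrable _ _
        rw [Complex.re_sum]
        refine Finset.sum_congr rfl fun n _ => ?_
        rw [intervalIntegral.integral_finsetSum]
        swap
        · intro m _
          exact ((gramM_cont M v hv m n).const_mul _).intervalIntegrable _ _
        simp_rw [intervalIntegral.integral_const_mul]
        have : ∀ m, ∫ x in (0:ℝ)..L, gramM M v x m n = if m = n then 1 else 0 := fun m => ho m n
        simp only [this, mul_ite, mul_one, mul_zero, Finset.sum_ite_eq', Finset.mem_univ, if_true]
        simp only [hD, mul_conj_norm, intervalIntegral.integral_ofReal, Complex.ofReal_re]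


/-- Antiderivative used for the momentum decomposition. -/
noncomputable def PhiJ (t : ℝ) : ℝ :=
  t ^ 2 / (3 * (1 + t ^ 3)) + (1 / 3) * (-(1 / 3) * Real.log (1 + t) + (1 / 6) * Real.log (1 - t + t ^ 2)
    + (1 / √3) * Real.arctan ((2 * t - 1) / √3))

lemma PhiJ_deriv (t : ℝ) (ht : 0 ≤ t) : HasDerivAt PhiJ (t / (1 + t ^ 3) ^ 2) t := by
  have h1 : (1 + t) ≠ 0 := by positivity
  have h2 : (1 - t + t ^ 2) ≠ 0 := by nlinarith [sq_nonneg (t - 1)]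
  have h3 : (1 + t ^ 3) ≠ 0 := by positivity
  have hs : √3 ^ 2 = (3:ℝ) := Real.sq_sqrt (by norm_num)
  have hs0 : √3 ≠ (0:ℝ) := by positivity
  have d1 : HasDerivAt (fun t : ℝ => t ^ 2 / (3 * (1 + t ^ 3)))
      ((2 * t * (3 * (1 + t ^ 3)) - t ^ 2 * (3 * (3 * t ^ 2))) / (3 * (1 + t ^ 3)) ^ 2) t := by
    have a1 : HasDerivAt (fun t : ℝ => t ^ 2) (2 * t) t := by simpa using hasDerivAt_pow 2 t
    have a2 : HasDerivAt (fun t : ℝ => 3 * (1 + t ^ 3)) (3 * (3 * t ^ 2)) t := by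
      simpa using ((hasDerivAt_pow 3 t).const_add 1).const_mul 3
    exact a1.div a2 (by positivity)
  have d2 : HasDerivAt (fun t : ℝ => Real.log (1 + t)) (1 / (1 + t)) t :=
    ((hasDerivAt_id t).const_add 1).log h1
  have d3 : HasDerivAt (fun t : ℝ => Real.log (1 - t + t ^ 2)) ((-1 + 2 * t) / (1 - t + t ^ 2)) t := by
    have : HasDerivAt (fun t : ℝ => 1 - t + t ^ 2) (-1 + 2 * t) t := by
      exact (((hasDerivAt_id t).const_sub 1).add (hasDerivAt_pow 2 t)).congr_deriv (by simp)
    exact this.log h2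
  have d4 : HasDerivAt (fun t : ℝ => Real.arctan ((2 * t - 1) / √3))
      (1 / (1 + ((2 * t - 1) / √3) ^ 2) * (2 * 1 / √3)) t :=
    ((((hasDerivAt_id t).const_mul 2).sub_const 1).div_const √3).arctan
  have := d1.add ((((d2.const_mul (-(1/3))).add (d3.const_mul (1/6))).add (d4.const_mul (1 / √3))).const_mul (1/3))
  refine this.congr_deriv ?_
  have e : (1 / √3) * (1 / (1 + ((2 * t - 1) / √3) ^ 2) * (2 * 1 / √3)) = 1 / (2 * (1 - t + t ^ 2)) := by
    rw [div_pow, hs]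
    have : (1 + (2 * t - 1) ^ 2 / 3) ≠ 0 := by positivity
    have h4 : (3 + (2 * t - 1) ^ 2) ≠ 0 := by positivity
    field_simp
    rw [hs]; ring
  rw [e]
  have h5 : 1 + t ^ 3 = (1 + t) * (1 - t + t ^ 2) := by ring
  rw [h5]
  field_simp
  ring

lemma PhiJ_lim : Tendsto PhiJ atTop (nhds (π / (6 * √3))) := by
  have hs0 : (0:ℝ) < √3 := by positivity
  have l1 : Tendsto (fun t : ℝ => t ^ 2 / (3 * (1 + t ^ 3))) atTop (nhds 0) := by
    have hb : Tendsto (fun t : ℝ => 1 / t) atTop (nhds 0) := by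
      simpa using tendsto_inv_atTop_zero (𝕜 := ℝ)
    refine squeeze_zero' ?_ ?_ hb
    · filter_upwards [eventually_gt_atTop 0] with t ht; positivity
    · filter_upwards [eventually_gt_atTop 0] with t ht
      rw [div_le_div_iff₀ (by positivity) ht]; nlinarith [pow_pos ht 3]
  have l2 : Tendsto (fun t : ℝ => -(1 / 3) * Real.log (1 + t) + (1 / 6) * Real.log (1 - t + t ^ 2)) atTop (nhds 0) := by
    have hr : Tendsto (fun t : ℝ => (1 - t + t ^ 2) / (1 + t) ^ 2) atTop (nhds 1) := by
      have hb : Tendsto (fun t : ℝ => 3 / t) atTop (nhds 0) := by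
        simpa [div_eq_mul_inv] using (tendsto_inv_atTop_zero (𝕜 := ℝ)).const_mul 3
      have : Tendsto (fun t : ℝ => 3 * t / (1 + t) ^ 2) atTop (nhds 0) := by
        refine squeeze_zero' ?_ ?_ hb
        · filter_upwards [eventually_gt_atTop 0] with t ht; positivity
        · filter_upwards [eventually_gt_atTop 0] with t ht
          rw [div_le_div_iff₀ (by positivity) ht]; nlinarith [pow_pos ht 3]
      have h2 := (tendsto_const_nhds (x := (1:ℝ))).sub this
      rw [sub_zero] at h2
      refine h2.congr' ?_
      filter_upwards [eventually_gt_atTop 0] with t ht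
      field_simp; ring
    have := ((Real.continuousAt_log one_ne_zero).tendsto.comp hr).const_mul (1/6)
    rw [Real.log_one, mul_zero] at this
    refine this.congr' ?_
    filter_upwards [eventually_gt_atTop 0] with t ht
    have h2 : (1 - t + t ^ 2) ≠ 0 := by nlinarith [sq_nonneg (t - 1)]
    simp only [Function.comp_apply]
    rw [Real.log_div h2 (by positivity), Real.log_pow]; push_cast; ring
  have l3 : Tendsto (fun t : ℝ => Real.arctan ((2 * t - 1) / √3)) atTop (nhds (π / 2)) := by
    have h1 : Tendsto (fun t : ℝ => (2 * t - 1) / √3) atTop atTop := by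
      apply Tendsto.atTop_div_const hs0
      apply tendsto_atTop_add_const_right
      exact tendsto_id.const_mul_atTop (by norm_num)
    exact (Real.tendsto_arctan_atTop.mono_right nhdsWithin_le_nhds).comp h1
  have := l1.add ((l2.add (l3.const_mul (1 / √3))).const_mul (1/3))
  have e : (0:ℝ) + 1 / 3 * (0 + 1 / √3 * (π / 2)) = π / (6 * √3) := by field_simp; ring
  rw [e] at this
  exact this

lemma PhiJ_zero : PhiJ 0 = - (π / (18 * √3)) := by
  have h : Real.arctan (1 / √3) = π / 6 := by
    rw [← Real.tan_pi_div_six, Real.arctan_tan] <;> linarith [Real.pi_pos]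
  have h2 : Real.arctan (-1 / √3) = - (π / 6) := by rw [neg_div, Real.arctan_neg, h]
  unfold PhiJ
  simp [h2]
  field_simp; norm_num

lemma J_bound (T : ℝ) (hT : 0 ≤ T) : ∫ t in (0:ℝ)..T, t / (1 + t ^ 3) ^ 2 ≤ 2 * π / (9 * √3) := by
  have hIntg : ∀ a b : ℝ, 0 ≤ a → a ≤ b → ∫ t in a..b, t / (1 + t ^ 3) ^ 2 = PhiJ b - PhiJ a := by
    intro a b ha hab
    apply intervalIntegral.integral_eq_sub_of_hasDerivAt
    · intro x hx
      rw [Set.uIcc_of_le hab] at hx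
      exact PhiJ_deriv x (ha.trans hx.1)
    · apply ContinuousOn.intervalIntegrable
      rw [Set.uIcc_of_le hab]
      apply ContinuousOn.div (by fun_prop) (by fun_prop)
      intro x hx
      have : 0 ≤ x := ha.trans hx.1
      positivity
  have hle : PhiJ T ≤ π / (6 * √3) := by
    apply ge_of_tendsto PhiJ_lim
    filter_upwards [eventually_ge_atTop T] with s hs
    have h1 := hIntg T s hT hs
    have h2 : 0 ≤ ∫ t in T..s, t / (1 + t ^ 3) ^ 2 := by
      apply intervalIntegral.integral_nonneg hs
      intro u hu
      have : 0 ≤ u := hT.trans hu.1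
      positivity
    linarith
  rw [hIntg 0 T le_rfl hT, PhiJ_zero]
  have : (2 * π / (9 * √3)) = π / (6 * √3) + π / (18 * √3) := by field_simp; ring
  linarith

lemma J_scaled (p B : ℝ) (hp : 0 < p) (hB : 0 ≤ B) :
    ∫ b in (0:ℝ)..B, b * (p ^ 3 / (p ^ 3 + b ^ 3)) ^ 2 ≤ p ^ 2 * (2 * π / (9 * √3)) := by
  have h := J_bound (B / p) (by positivity)
  have e : ∀ b ∈ Set.uIcc 0 B, b * (p ^ 3 / (p ^ 3 + b ^ 3)) ^ 2 = p * ((b / p) / (1 + (b / p) ^ 3) ^ 2) := by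
    intro b hb
    rw [Set.uIcc_of_le hB] at hb
    have : 0 ≤ b := hb.1
    field_simp
  rw [intervalIntegral.integral_congr e, intervalIntegral.integral_const_mul,
    intervalIntegral.integral_comp_div (fun t => t / (1 + t ^ 3) ^ 2) hp.ne', zero_div, smul_eq_mul]
  nlinarith [mul_le_mul_of_nonneg_left h (sq_nonneg p)]

lemma p_pos (α : ℝ) (hα : ∀ m : ℤ, α ≠ m) (k : ℤ) : 0 < |(k : ℝ) + α| := by
  rw [abs_pos]
  intro h
  apply hα (-k)
  push_cast; linarith

lemma summable_p3 (α : ℝ) : Summable (fun k : ℤ => 1 / |(k : ℝ) + α| ^ 3) := by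
  have := (Real.summable_one_div_int_add_rpow α 3).2 (by norm_num)
  refine this.congr fun k => ?_
  norm_cast

lemma summable_p6 (α : ℝ) : Summable (fun k : ℤ => 1 / |(k : ℝ) + α| ^ 6) := by
  have := (Real.summable_one_div_int_add_rpow α 6).2 (by norm_num)
  refine this.congr fun k => ?_
  norm_cast

lemma summable_F (α b : ℝ) (hα : ∀ m : ℤ, α ≠ m) (hb : 0 ≤ b) :
    Summable (fun k : ℤ => ((|(k : ℝ) + α| ^ 3 + b) ^ 2)⁻¹) := by
  refine Summable.of_nonneg_of_le (fun k => by positivity) (fun k => ?_) (summable_p6 α)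
  have := p_pos α hα k
  rw [one_div]
  apply inv_anti₀ (by positivity)
  have h3 := pow_pos this 3
  nlinarith

lemma Fsum_cube (α β : ℝ) (hβ : 0 ≤ β) :
    Fsum α (β ^ 3) = β ^ 5 * ∑' k : ℤ, ((|(k : ℝ) + α| ^ 3 + β ^ 3) ^ 2)⁻¹ := by
  unfold Fsum
  congr 1
  rw [← Real.rpow_natCast, ← Real.rpow_mul hβ, ← Real.rpow_natCast]
  norm_num

lemma Fsum_fract (α b : ℝ) : Fsum α b = Fsum (Int.fract α) b := by
  unfold Fsum
  congr 1
  rw [← (Equiv.addRight ⌊α⌋).tsum_eq (fun k : ℤ => ((|(k : ℝ) + Int.fract α| ^ 3 + b) ^ 2)⁻¹)]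
  congr 1; ext k
  simp only [Equiv.coe_addRight]
  have : ((k + ⌊α⌋ : ℤ) : ℝ) + Int.fract α = k + α := by
    push_cast; linarith [Int.fract_add_floor α]
  rw [this]

lemma term_le1 (p β : ℝ) (hp : 0 < p) (hβ : 0 < β) : β ^ 5 * ((p ^ 3 + β ^ 3) ^ 2)⁻¹ ≤ 1 / p := by
  rw [← div_eq_mul_inv, div_le_div_iff₀ (by positivity) hp]
  rcases le_total p β with h | h
  · have : β ^ 5 * p ≤ β ^ 5 * β := mul_le_mul_of_nonneg_left h (by positivity)
    nlinarith [pow_pos hp 3, pow_pos hβ 3, pow_pos hp 6, mul_pos (pow_pos hp 3) (pow_pos hβ 3)]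
  · have : β ^ 5 * p ≤ p ^ 5 * p := mul_le_mul_of_nonneg_right (pow_le_pow_left₀ hβ.le h 5) hp.le
    nlinarith [pow_pos hp 3, pow_pos hβ 3, pow_pos hβ 6, mul_pos (pow_pos hp 3) (pow_pos hβ 3)]

lemma term_le2 (p β : ℝ) (n : ℕ) (hp : (n : ℝ) + 1 ≤ p) (hβ : 0 < β) :
    β ^ 5 * ((p ^ 3 + β ^ 3) ^ 2)⁻¹ ≤ 16 * β * (1 / (n + β) - 1 / ((n + 1 : ℕ) + β)) := by
  set x : ℝ := (n : ℝ) + 1 with hx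
  have hx0 : 0 < x := by positivity
  have h1 : β ^ 5 * ((p ^ 3 + β ^ 3) ^ 2)⁻¹ ≤ β ^ 5 * ((x ^ 3 + β ^ 3) ^ 2)⁻¹ := by
    gcongr
  have h2 : (x + β) ^ 3 ≤ 4 * (x ^ 3 + β ^ 3) := by nlinarith [mul_nonneg (add_pos hx0 hβ).le (sq_nonneg (x - β))]
  have h3 : (x + β) ^ 2 * β ^ 4 ≤ 16 * (x ^ 3 + β ^ 3) ^ 2 := by
    have a : ((x + β) ^ 3) ^ 2 ≤ (4 * (x ^ 3 + β ^ 3)) ^ 2 := pow_le_pow_left₀ (by positivity) h2 2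
    have b : β ^ 4 ≤ (x + β) ^ 4 := pow_le_pow_left₀ hβ.le (by linarith) 4
    nlinarith [mul_le_mul_of_nonneg_left b (sq_nonneg (x + β))]
  have h4 : β ^ 5 * ((x ^ 3 + β ^ 3) ^ 2)⁻¹ ≤ 16 * β * (1 / (x + β) ^ 2) := by
    rw [← div_eq_mul_inv, mul_one_div, div_le_div_iff₀ (by positivity) (by positivity)]
    nlinarith [mul_le_mul_of_nonneg_left h3 hβ.le]
  have h5 : 1 / (x + β) ^ 2 ≤ 1 / (n + β) - 1 / ((n + 1 : ℕ) + β) := by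
    have hn : (0:ℝ) < n + β := by positivity
    push_cast
    rw [← hx, div_sub_div _ _ hn.ne' (by positivity), div_le_div_iff₀ (by positivity) (by positivity)]
    have : (n : ℝ) + β = x + β - 1 := by rw [hx]; ring
    rw [this] at hn ⊢
    nlinarith [mul_pos hn (add_pos hx0 hβ)]
  exact h1.trans (h4.trans (mul_le_mul_of_nonneg_left h5 (by positivity)))

lemma half_bound (β p0 : ℝ) (hβ : 0 < β) (hp0 : 0 < p0) (p : ℕ → ℝ) (h0 : p 0 = p0)
    (hp : ∀ n : ℕ, (n : ℝ) + 1 ≤ p (n + 1)) (hs : Summable (fun n => ((p n ^ 3 + β ^ 3) ^ 2)⁻¹)) :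
    β ^ 5 * ∑' n, ((p n ^ 3 + β ^ 3) ^ 2)⁻¹ ≤ 1 / p0 + 16 := by
  rw [hs.tsum_eq_zero_add, mul_add, ← tsum_mul_left, h0]
  refine add_le_add (term_le1 p0 β hp0 hβ) ?_
  apply Real.tsum_le_of_sum_range_le
  · intro n; positivity
  · intro m
    have h := Finset.sum_le_sum (s := Finset.range m) fun n _ => term_le2 (p (n + 1)) β n (hp n) hβ
    refine h.trans ?_
    rw [← Finset.mul_sum, Finset.sum_range_sub' (fun n : ℕ => 1 / ((n : ℝ) + β)) m]
    have h1 : 0 ≤ 1 / ((m : ℝ) + β) := by positivity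
    have h2 : 16 * β * (1 / ((0 : ℕ) + β)) = 16 := by simp; field_simp
    nlinarith

lemma Fsum_bdd (α : ℝ) (hα : ∀ m : ℤ, α ≠ m) (β : ℝ) (hβ : 0 < β) :
    Fsum α (β ^ 3) ≤ (1 / Int.fract α + 16) + (1 / (1 - Int.fract α) + 16) := by
  rw [Fsum_fract]
  set a := Int.fract α with ha
  have ha0 : 0 < a := by
    refine (Int.fract_nonneg α).lt_of_ne fun h => ?_
    apply hα ⌊α⌋
    have := Int.fract_add_floor α
    linarith
  have ha1 : a < 1 := Int.fract_lt_one α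
  have haZ : ∀ m : ℤ, a ≠ m := by
    intro m hm
    apply hα (m + ⌊α⌋)
    have := Int.fract_add_floor α
    push_cast; linarith
  rw [Fsum_cube a β hβ.le]
  have hs := summable_F a (β ^ 3) haZ (by positivity)
  have key : ∀ f : ℤ → ℝ, Summable f → ∑' k, f k = ∑' n : ℕ, f n + ∑' n : ℕ, f (-((n : ℤ) + 1)) ∧
      Summable (fun n : ℕ => f n) ∧ Summable (fun n : ℕ => f (-((n : ℤ) + 1))) := by
    intro f hf
    have h1 : Summable (fun n : ℕ => f n) := hf.comp_injective (i := fun n : ℕ => (n : ℤ)) Nat.cast_injective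
    have h2 : Summable (fun n : ℕ => f (-((n : ℤ) + 1))) :=
      hf.comp_injective (i := fun n : ℕ => (-((n : ℤ) + 1))) (fun x y h => by simpa using h)
    exact ⟨tsum_of_nat_of_neg_add_one h1 h2, h1, h2⟩
  obtain ⟨e, hs1, hs2⟩ := key _ hs
  rw [e, mul_add]
  refine add_le_add ?_ ?_
  · refine half_bound β a hβ ha0 (fun n : ℕ => |((n : ℤ) : ℝ) + a|) ?_ ?_ hs1
    · simp [abs_of_pos ha0]
    · intro n
      refine le_trans ?_ (le_abs_self _)
      push_cast; linarith
  · refine half_bound β (1 - a) hβ (by linarith) (fun n : ℕ => |((-((n : ℤ) + 1) : ℤ) : ℝ) + a|) ?_ ?_ hs2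
    · simp only [Nat.cast_zero]; push_cast
      rw [abs_of_neg] <;> linarith
    · intro n
      refine le_trans ?_ (neg_le_abs _)
      push_cast; linarith

lemma Fsum_le_supF (α : ℝ) (hα : ∀ m : ℤ, α ≠ m) (β : ℝ) (hβ : 0 ≤ β) : Fsum α (β ^ 3) ≤ supF α := by
  unfold supF
  have hb : BddAbove (Set.range fun b : {x : ℝ // 0 ≤ x} => Fsum α b.1) := by
    refine ⟨max 0 ((1 / Int.fract α + 16) + (1 / (1 - Int.fract α) + 16)), ?_⟩
    rintro _ ⟨⟨b, hb⟩, rfl⟩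
    rcases hb.eq_or_lt with h | h
    · apply le_max_of_le_left
      simp only [← h, Fsum]
      rw [Real.zero_rpow (by norm_num)]; simp
    · apply le_max_of_le_right
      have e : b = (b ^ ((1:ℝ)/3)) ^ 3 := by
        rw [← Real.rpow_natCast, ← Real.rpow_mul h.le]; norm_num
      simp only
      rw [e]
      exact Fsum_bdd α hα _ (by positivity)
  exact le_ciSup hb ⟨β ^ 3, by positivity⟩

lemma supF_pos (α : ℝ) (hα : ∀ m : ℤ, α ≠ m) : 0 < supF α := by
  refine lt_of_lt_of_le ?_ (Fsum_le_supF α hα 1 zero_le_one)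
  rw [Fsum_cube α 1 zero_le_one]
  have := (summable_F α (1 ^ 3) hα (by norm_num)).tsum_pos (fun k => by positivity) 0 (by positivity)
  linarith


lemma hasSum_congr_fun {E : Type} [AddCommMonoid E] [TopologicalSpace E] {f g : ℤ → E} {a : E} (h : HasSum g a)
    (e : ∀ k, f k = g k) : HasSum f a := by
  rw [funext e]; exact h

/-- Quasi-periodic exponentials. -/
noncomputable def eK (α L : ℝ) (k : ℤ) (x : ℝ) : ℂ :=
  Complex.exp ((2 * π * (k + α) / L * x : ℝ) * Complex.I)

lemma eK_cont (α L : ℝ) (k : ℤ) : Continuous (eK α L k) := by unfold eK; fun_prop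

lemma eK_norm (α L : ℝ) (k : ℤ) (x : ℝ) : ‖eK α L k x‖ = 1 := by
  unfold eK; rw [Complex.norm_exp_ofReal_mul_I]

lemma eK_conj (α L : ℝ) (k : ℤ) (x : ℝ) : (starRingEnd ℂ) (eK α L k x) =
    Complex.exp (-((2 * π * (k + α) / L * x : ℝ) * Complex.I)) := by
  unfold eK; rw [← Complex.exp_conj, map_mul, Complex.conj_ofReal, Complex.conj_I, mul_neg]

lemma eK_conj_cont (α L : ℝ) (k : ℤ) : Continuous (fun x => (starRingEnd ℂ) (eK α L k x)) :=
  Complex.continuous_conj.comp (eK_cont α L k)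

lemma eK_sub (α L : ℝ) (k : ℤ) (x t : ℝ) :
    eK α L k (x - t) = eK α L k x * (starRingEnd ℂ) (eK α L k t) := by
  rw [eK_conj]; unfold eK; rw [← Complex.exp_add]; congr 1; push_cast; ring

/-- Twisted Fourier coefficients. -/
noncomputable def cf (α L : ℝ) (φ : ℝ → ℂ) (k : ℤ) : ℂ :=
  (1 / L : ℝ) * ∫ t in (0:ℝ)..L, φ t * (starRingEnd ℂ) (eK α L k t)

lemma cf_parseval (α L : ℝ) (hL : 0 < L) (φ : ℝ → ℂ) (hφ : Continuous φ) :
    HasSum (fun k => ‖cf α L φ k‖ ^ 2) (1 / L * ∫ x in (0:ℝ)..L, ‖φ x‖ ^ 2) := by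
  set g : ℝ → ℂ := fun x => φ x * Complex.exp (-((2 * π * α / L * x : ℝ) * Complex.I)) with hg
  have hgc : Continuous g := by rw [hg]; fun_prop
  have hmem : MemLp g 2 (volume.restrict (Set.Ioc 0 L)) := by
    obtain ⟨C, hC⟩ := (isCompact_Icc (a := (0:ℝ)) (b := L)).exists_bound_of_continuousOn hgc.continuousOn
    refine MemLp.of_bound hgc.aestronglyMeasurable C ?_
    rw [ae_restrict_iff' measurableSet_Ioc]
    exact ae_of_all _ fun x hx => hC x ⟨hx.1.le, hx.2⟩
  have h := hasSum_sq_fourierCoeffOn hL hmem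
  have hn : ∀ x, ‖g x‖ = ‖φ x‖ := by
    intro x
    have : (-((2 * π * α / L * x : ℝ) * Complex.I)) = ((-(2 * π * α / L * x) : ℝ) : ℂ) * Complex.I := by
      push_cast; ring
    rw [hg]; simp only; rw [this, norm_mul, Complex.norm_exp_ofReal_mul_I, mul_one]
  simp only [hn, sub_zero, smul_eq_mul] at h
  rw [one_div]
  convert h using 2
  rename_i k
  congr 2
  rw [fourierCoeffOn_eq_integral]
  unfold cf
  rw [sub_zero, Complex.real_smul]
  congr 1
  apply intervalIntegral.integral_congr
  intro x _
  simp only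
  rw [fourier_coe_apply, eK_conj, smul_eq_mul, hg]
  simp only
  rw [mul_comm (Complex.exp (_ / _)), mul_assoc (φ x), ← Complex.exp_add]
  congr 2
  push_cast
  field_simp
  ring

lemma cf_deriv (α L : ℝ) (hL : 0 < L) (φ φ' : ℝ → ℂ) (hφ' : Continuous φ')
    (hd : ∀ x, HasDerivAt φ (φ' x) x)
    (hq : φ L = Complex.exp ((2 * π * α : ℝ) * Complex.I) * φ 0) (k : ℤ) :
    cf α L φ' k = ((2 * π * (k + α) / L : ℝ) * Complex.I) * cf α L φ k := by
  set w : ℂ := ((2 * π * (k + α) / L : ℝ) : ℂ) * Complex.I with hw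
  have hee : (fun t : ℝ => (starRingEnd ℂ) (eK α L k t)) = fun t : ℝ => Complex.exp (-w * t) := by
    ext t; rw [eK_conj, hw]; congr 1; push_cast; ring
  have hde : ∀ t : ℝ, HasDerivAt (fun t : ℝ => (starRingEnd ℂ) (eK α L k t)) (-w * (starRingEnd ℂ) (eK α L k t)) t := by
    intro t
    rw [hee]
    have e2 := congrFun hee t
    beta_reduce at e2
    rw [e2]
    have h1 : HasDerivAt (fun t : ℝ => -w * (t : ℂ)) (-w) t := by
      simpa using (Complex.ofRealCLM.hasDerivAt (x := t)).const_mul (-w)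
    exact (h1.cexp).congr_deriv (by ring)
  have hφ : Continuous φ := continuous_iff_continuousAt.2 fun x => (hd x).continuousAt
  have hec := eK_conj_cont α L k
  have h := intervalIntegral.integral_mul_deriv_eq_deriv_mul (a := 0) (b := L) (u := fun t : ℝ => (starRingEnd ℂ) (eK α L k t))
    (v := φ) (u' := fun t => -w * (starRingEnd ℂ) (eK α L k t)) (v' := φ') (fun x _ => hde x) (fun x _ => hd x)
    ((hec.const_mul _).intervalIntegrable _ _) (hφ'.intervalIntegrable _ _)
  have hb : (starRingEnd ℂ) (eK α L k L) * φ L = φ 0 := by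
    rw [hq, eK_conj, ← mul_assoc, ← Complex.exp_add]
    have : (-((2 * π * (k + α) / L * L : ℝ) * Complex.I) + (2 * π * α : ℝ) * Complex.I) = ((-k : ℤ) : ℂ) * (2 * π * Complex.I) := by
      push_cast
      have : (L : ℂ) ≠ 0 := by exact_mod_cast hL.ne'
      field_simp; ring
    rw [this, Complex.exp_int_mul_two_pi_mul_I, one_mul]
  have h0 : (starRingEnd ℂ) (eK α L k 0) = 1 := by rw [eK_conj]; simp
  rw [hb, h0, one_mul, sub_self, zero_sub] at h
  unfold cf
  simp_rw [mul_comm (φ' _), mul_comm (φ _)]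
  rw [h, ← intervalIntegral.integral_neg]
  simp_rw [neg_mul, neg_neg, mul_assoc]
  rw [intervalIntegral.integral_const_mul]
  ring

lemma cf_deriv_sum (α L : ℝ) (hL : 0 < L) (φ φ' : ℝ → ℂ) (hφ' : Continuous φ')
    (hd : ∀ x, HasDerivAt φ (φ' x) x)
    (hq : φ L = Complex.exp ((2 * π * α : ℝ) * Complex.I) * φ 0) :
    HasSum (fun k : ℤ => |(k : ℝ) + α| ^ 2 * ‖cf α L φ k‖ ^ 2)
      ((L / (2 * π)) ^ 2 * (1 / L * ∫ x in (0:ℝ)..L, ‖φ' x‖ ^ 2)) := by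
  have h := (cf_parseval α L hL φ' hφ').mul_left ((L / (2 * π)) ^ 2)
  refine hasSum_congr_fun h fun k => ?_
  rw [cf_deriv α L hL φ φ' hφ' hd hq k, norm_mul, norm_mul, Complex.norm_I, Complex.norm_real, Real.norm_eq_abs,
    mul_one, mul_pow, sq_abs, sq_abs]
  field_simp

/-- Integration of a dominated series. -/
lemma hasSum_int {E : Type} [NormedAddCommGroup E] [NormedSpace ℝ E] (a b : ℝ) (f : ℤ → ℝ → E)
    (hf : ∀ k, Continuous (f k)) (bd : ℤ → ℝ) (hbd : Summable bd)
    (hle : ∀ k, ∀ x ∈ Set.uIoc a b, ‖f k x‖ ≤ bd k) (F : ℝ → E)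
    (hF : ∀ x ∈ Set.uIoc a b, HasSum (fun k => f k x) (F x)) :
    HasSum (fun k => ∫ x in a..b, f k x) (∫ x in a..b, F x) := by
  apply intervalIntegral.hasSum_integral_of_dominated_convergence (fun k _ => bd k)
  · intro k; exact (hf k).aestronglyMeasurable
  · intro k; exact ae_of_all _ (hle k)
  · exact ae_of_all _ fun _ _ => hbd
  · exact intervalIntegrable_const
  · exact ae_of_all _ hF

/-- The kernel of the Fourier multiplier. -/
noncomputable def kerH (α L : ℝ) (h : ℤ → ℝ) (x : ℝ) : ℂ := ∑' k, (h k : ℂ) * eK α L k x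

noncomputable def sOp (L : ℝ) (H : ℝ → ℂ) (φ : ℝ → ℂ) (x : ℝ) : ℂ :=
  (1 / L : ℝ) * ∫ t in (0:ℝ)..L, H (x - t) * φ t

lemma ker_bd (α L : ℝ) (h : ℤ → ℝ) (h0 : ∀ k, 0 ≤ h k) (k : ℤ) (x : ℝ) : ‖(h k : ℂ) * eK α L k x‖ ≤ h k := by
  rw [norm_mul, eK_norm, mul_one, Complex.norm_real, Real.norm_of_nonneg (h0 k)]

lemma ker_hasSum (α L : ℝ) (h : ℤ → ℝ) (h0 : ∀ k, 0 ≤ h k) (hs : Summable h) (x : ℝ) :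
    HasSum (fun k => (h k : ℂ) * eK α L k x) (kerH α L h x) :=
  (Summable.of_norm_bounded hs fun k => ker_bd α L h h0 k x).hasSum

lemma ker_cont (α L : ℝ) (h : ℤ → ℝ) (h0 : ∀ k, 0 ≤ h k) (hs : Summable h) : Continuous (kerH α L h) :=
  continuous_tsum (fun k => (eK_cont α L k).const_mul _) hs fun k x => ker_bd α L h h0 k x

lemma sOp_cont (L : ℝ) (H : ℝ → ℂ) (hH : Continuous H) (φ : ℝ → ℂ) (hφ : Continuous φ) :
    Continuous (sOp L H φ) := by
  unfold sOp
  refine Continuous.const_mul (cont_int (fun x t => H (x - t) * φ t) ?_ 0 L) _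
  fun_prop

lemma sOp_hasSum (α L : ℝ) (hL : 0 < L) (h : ℤ → ℝ) (h0 : ∀ k, 0 ≤ h k) (hs : Summable h)
    (φ : ℝ → ℂ) (hφ : Continuous φ) (x : ℝ) :
    HasSum (fun k => (h k : ℂ) * cf α L φ k * eK α L k x) (sOp L (kerH α L h) φ x) := by
  obtain ⟨C, hC⟩ := (isCompact_Icc (a := (0:ℝ)) (b := L)).exists_bound_of_continuousOn hφ.continuousOn
  have := hasSum_int 0 L (fun k t => ((h k : ℂ) * eK α L k (x - t)) * φ t)
    (fun k => ((continuous_const.mul ((eK_cont α L k).comp (by fun_prop))).mul hφ)) (fun k => h k * C) (hs.mul_right C)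
    (fun k t ht => by
      rw [norm_mul]
      rw [Set.uIoc_of_le hL.le] at ht
      exact mul_le_mul (ker_bd α L h h0 k _) (hC t ⟨ht.1.le, ht.2⟩) (norm_nonneg _) (h0 k))
    (fun t => kerH α L h (x - t) * φ t) (fun t _ => (ker_hasSum α L h h0 hs (x - t)).mul_right _)
  have := this.mul_left ((1 / L : ℝ) : ℂ)
  unfold sOp
  refine hasSum_congr_fun this fun k => ?_
  have e : ∀ t, (h k : ℂ) * eK α L k (x - t) * φ t = ((h k : ℂ) * eK α L k x) * (φ t * (starRingEnd ℂ) (eK α L k t)) := by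
    intro t; rw [eK_sub]; ring
  simp_rw [e]
  rw [intervalIntegral.integral_const_mul]
  unfold cf; ring

lemma eK_orth (α L : ℝ) (hL : 0 < L) (j k : ℤ) :
    ∫ t in (0:ℝ)..L, eK α L j t * (starRingEnd ℂ) (eK α L k t) = if j = k then (L : ℂ) else 0 := by
  have hLc : (L : ℂ) ≠ 0 := by exact_mod_cast hL.ne'
  have e : ∀ t : ℝ, eK α L j t * (starRingEnd ℂ) (eK α L k t) =
      Complex.exp ((2 * π * Complex.I * ((j : ℂ) - k) / L) * t) := by
    intro t
    rw [eK_conj]; unfold eK; rw [← Complex.exp_add]; congr 1; push_cast; field_simp; ring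
  simp_rw [e]
  split_ifs with hjk
  · subst hjk; simp
  · have hc : (2 * π * Complex.I * ((j : ℂ) - k) / L) ≠ 0 := by
      have h1 : (j : ℂ) - k ≠ 0 := sub_ne_zero.2 (by exact_mod_cast hjk)
      have := Real.pi_ne_zero
      simp [h1, hLc, Complex.I_ne_zero, this]
    rw [integral_exp_mul_complex hc]
    have : (2 * π * Complex.I * ((j : ℂ) - k) / L) * (L : ℝ) = ((j - k : ℤ) : ℂ) * (2 * π * Complex.I) := by
      push_cast; field_simp
    rw [this, Complex.exp_int_mul_two_pi_mul_I]; simp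

lemma cf_bdd (α L : ℝ) (hL : 0 < L) (φ : ℝ → ℂ) (hφ : Continuous φ) : ∃ C, 0 ≤ C ∧ ∀ k, ‖cf α L φ k‖ ≤ C := by
  set X := (1 / L * ∫ x in (0:ℝ)..L, ‖φ x‖ ^ 2)
  have hp := cf_parseval α L hL φ hφ
  refine ⟨√X, Real.sqrt_nonneg _, fun k => ?_⟩
  apply Real.le_sqrt_of_sq_le
  exact le_hasSum hp k fun _ _ => by positivity

lemma cf_sOp (α L : ℝ) (hL : 0 < L) (h : ℤ → ℝ) (h0 : ∀ k, 0 ≤ h k) (hs : Summable h)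
    (φ : ℝ → ℂ) (hφ : Continuous φ) (k : ℤ) :
    cf α L (sOp L (kerH α L h) φ) k = h k * cf α L φ k := by
  obtain ⟨C, hC0, hC⟩ := cf_bdd α L hL φ hφ
  have := hasSum_int 0 L (fun j t => ((h j : ℂ) * cf α L φ j * eK α L j t) * (starRingEnd ℂ) (eK α L k t))
    (fun j => ((continuous_const.mul (eK_cont α L j)).mul (eK_conj_cont α L k))) (fun j => h j * C) (hs.mul_right C)
    (fun j t _ => by
      rw [norm_mul, norm_mul, norm_mul, RCLike.norm_conj, eK_norm, eK_norm, mul_one, mul_one, Complex.norm_real, Real.norm_of_nonneg (h0 j)]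
      exact mul_le_mul_of_nonneg_left (hC j) (h0 j))
    _ (fun t _ => (sOp_hasSum α L hL h h0 hs φ hφ t).mul_right _)
  have e : ∀ j, ∫ t in (0:ℝ)..L, ((h j : ℂ) * cf α L φ j * eK α L j t) * (starRingEnd ℂ) (eK α L k t) =
     if j = k then (h k : ℂ) * cf α L φ k * L else 0 := by
    intro j
    simp_rw [mul_assoc ((h j : ℂ) * cf α L φ j)]
    rw [intervalIntegral.integral_const_mul, eK_orth α L hL]
    split_ifs with hjk
    · rw [hjk]
    · simp
  simp_rw [e] at this
  have h2 := this.unique (hasSum_ite_eq k _)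
  have hLc : (L : ℂ) ≠ 0 := by exact_mod_cast hL.ne'
  rw [cf, h2]; push_cast; field_simp

lemma res_parseval (α L : ℝ) (hL : 0 < L) (h : ℤ → ℝ) (h0 : ∀ k, 0 ≤ h k) (hs : Summable h)
    (φ : ℝ → ℂ) (hφ : Continuous φ) :
    HasSum (fun k => (1 - h k) ^ 2 * ‖cf α L φ k‖ ^ 2)
      (1 / L * ∫ x in (0:ℝ)..L, ‖φ x - sOp L (kerH α L h) φ x‖ ^ 2) := by
  have hc := sOp_cont L _ (ker_cont α L h h0 hs) φ hφ
  have hp := cf_parseval α L hL (fun x => φ x - sOp L (kerH α L h) φ x) (hφ.sub hc)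
  convert hp using 2
  rename_i k
  have : cf α L (fun x => φ x - sOp L (kerH α L h) φ x) k = ((1 - h k : ℝ) : ℂ) * cf α L φ k := by
    have h1 := cf_sOp α L hL h h0 hs φ hφ k
    have : cf α L (fun x => φ x - sOp L (kerH α L h) φ x) k = cf α L φ k - cf α L (sOp L (kerH α L h) φ) k := by
      unfold cf
      rw [← mul_sub, ← intervalIntegral.integral_sub]
      · simp_rw [sub_mul]
      · exact (hφ.mul (eK_conj_cont α L k)).intervalIntegrable _ _
      · exact (hc.mul (eK_conj_cont α L k)).intervalIntegrable _ _
    rw [this, h1]; push_cast; ring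
  rw [this, norm_mul, mul_pow, Complex.norm_real, Real.norm_eq_abs, sq_abs]

lemma sOp_le (α L : ℝ) (hL : 0 < L) (h : ℤ → ℝ) (h0 : ∀ k, 0 ≤ h k) (hs : Summable h)
    (Q : ℝ) (hQ : HasSum (fun k => h k ^ 2) Q)
    (φ : ℝ → ℂ) (hφ : Continuous φ) (x : ℝ) :
    ‖sOp L (kerH α L h) φ x‖ ^ 2 ≤ Q * (1 / L * ∫ x in (0:ℝ)..L, ‖φ x‖ ^ 2) := by
  have hp := cf_parseval α L hL φ hφ
  have hS := sOp_hasSum α L hL h h0 hs φ hφ x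
  have ht : Tendsto (fun s : Finset ℤ => ‖∑ k ∈ s, (h k : ℂ) * cf α L φ k * eK α L k x‖ ^ 2) atTop
      (nhds (‖sOp L (kerH α L h) φ x‖ ^ 2)) := (hS.norm.pow 2)
  refine le_of_tendsto' ht fun s => ?_
  have h1 : ‖∑ k ∈ s, (h k : ℂ) * cf α L φ k * eK α L k x‖ ≤ ∑ k ∈ s, h k * ‖cf α L φ k‖ := by
    refine (norm_sum_le _ _).trans (Finset.sum_le_sum fun k _ => ?_)
    rw [norm_mul, norm_mul, eK_norm, mul_one, Complex.norm_real, Real.norm_of_nonneg (h0 k)]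
  have h2 := Finset.sum_mul_sq_le_sq_mul_sq s h (fun k => ‖cf α L φ k‖)
  have h3 : ∑ k ∈ s, h k ^ 2 ≤ Q := sum_le_hasSum s (fun _ _ => by positivity) hQ
  have h4 := sum_le_hasSum s (fun _ _ => by positivity) hp
  calc _ ≤ (∑ k ∈ s, h k * ‖cf α L φ k‖) ^ 2 := pow_le_pow_left₀ (norm_nonneg _) h1 2
    _ ≤ _ := h2
    _ ≤ _ := mul_le_mul h3 h4 (Finset.sum_nonneg fun _ _ => by positivity) (hQ.nonneg fun _ => by positivity)


/-- Clamped spectral parameter. -/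
noncomputable def clB (B β : ℝ) : ℝ := max 0 (min β B)

lemma clB_cont (B : ℝ) : Continuous (clB B) := by unfold clB; fun_prop
lemma clB_nonneg (B β : ℝ) : 0 ≤ clB B β := le_max_left _ _
lemma clB_le (B β : ℝ) (hB : 0 ≤ B) : clB B β ≤ B := max_le hB (min_le_right _ _)
lemma clB_eq (B β : ℝ) (h0 : 0 ≤ β) (h1 : β ≤ B) : clB B β = β := by
  unfold clB; rw [min_eq_left h1, max_eq_right h0]

/-- The multiplier. -/
noncomputable def hM (α B β : ℝ) (k : ℤ) : ℝ :=
  clB B β ^ 3 / (|(k : ℝ) + α| ^ 3 + clB B β ^ 3)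

lemma hM_nonneg (α B β : ℝ) (k : ℤ) : 0 ≤ hM α B β k := by
  have := clB_nonneg B β
  unfold hM; positivity

lemma hM_le_one (α : ℝ) (hα : ∀ m : ℤ, α ≠ m) (B β : ℝ) (k : ℤ) : hM α B β k ≤ 1 := by
  have := clB_nonneg B β
  have := p_pos α hα k
  unfold hM; rw [div_le_one (by positivity)]
  have := pow_pos this 3
  linarith

lemma hM_le (α : ℝ) (hα : ∀ m : ℤ, α ≠ m) (B : ℝ) (hB : 0 ≤ B) (β : ℝ) (k : ℤ) :
    hM α B β k ≤ B ^ 3 * (1 / |(k : ℝ) + α| ^ 3) := by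
  have h0 := clB_nonneg B β
  have h1 := clB_le B β hB
  have := p_pos α hα k
  unfold hM
  rw [mul_one_div]
  apply div_le_div₀ (by positivity) (pow_le_pow_left₀ h0 h1 3) (by positivity)
  have := pow_nonneg h0 3
  linarith

lemma hM_summable (α : ℝ) (hα : ∀ m : ℤ, α ≠ m) (B : ℝ) (hB : 0 ≤ B) (β : ℝ) : Summable (hM α B β) :=
  Summable.of_nonneg_of_le (hM_nonneg α B β) (hM_le α hα B hB β) ((summable_p3 α).mul_left _)

lemma hM_cont (α : ℝ) (hα : ∀ m : ℤ, α ≠ m) (B : ℝ) (k : ℤ) : Continuous (fun β => hM α B β k) := by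
  unfold hM
  have hc := clB_cont B
  refine Continuous.div (by fun_prop) (by fun_prop) fun β => ?_
  have h0 := clB_nonneg B β
  have := p_pos α hα k
  positivity

lemma hM_sq (α : ℝ) (hα : ∀ m : ℤ, α ≠ m) (B β : ℝ) (h0 : 0 ≤ β) (h1 : β ≤ B) :
    HasSum (fun k => hM α B β k ^ 2) (β * Fsum α (β ^ 3)) := by
  have h := (summable_F α (β ^ 3) hα (by positivity)).hasSum.mul_left (β ^ 6)
  rw [Fsum_cube α β h0, ← mul_assoc, ← pow_succ']
  refine hasSum_congr_fun h fun k => ?_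
  unfold hM
  rw [clB_eq B β h0 h1, div_pow, div_eq_mul_inv]; ring

lemma kerM_cont (α L : ℝ) (hα : ∀ m : ℤ, α ≠ m) (B : ℝ) (hB : 0 ≤ B) :
    Continuous (fun q : ℝ × ℝ => kerH α L (hM α B q.1) q.2) := by
  unfold kerH
  refine continuous_tsum (fun k => ?_) ((summable_p3 α).mul_left (B ^ 3)) fun k q => ?_
  · have h1 := hM_cont α hα B k
    have h2 := eK_cont α L k
    exact (Complex.continuous_ofReal.comp (h1.comp continuous_fst)).mul (h2.comp continuous_snd)
  · exact (ker_bd α L _ (hM_nonneg α B q.1) k q.2).trans (hM_le α hα B hB q.1 k)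

/-- The high-frequency part. -/
noncomputable def resM (α L B β : ℝ) (φ : ℝ → ℂ) (x : ℝ) : ℂ := φ x - sOp L (kerH α L (hM α B β)) φ x

lemma resM_cont3 (α L : ℝ) (hα : ∀ m : ℤ, α ≠ m) (B : ℝ) (hB : 0 ≤ B) (v : ℝ → ℝ → ℂ)
    (hv : Continuous (fun p : ℝ × ℝ => v p.1 p.2)) :
    Continuous (fun q : ℝ × ℝ × ℝ => resM α L B q.1 (fun t => v t q.2.2) q.2.1) := by
  unfold resM sOp
  refine Continuous.sub (hv.comp (f := fun q : ℝ × ℝ × ℝ => (q.2.1, q.2.2)) (by fun_prop)) (Continuous.const_mul ?_ _)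
  apply cont_int (fun (q : ℝ × ℝ × ℝ) t => kerH α L (hM α B q.1) (q.2.1 - t) * v t q.2.2)
  exact ((kerM_cont α L hα B hB).comp (f := fun p : (ℝ × ℝ × ℝ) × ℝ => (p.1.1, p.1.2.1 - p.2)) (by fun_prop)).mul
    (hv.comp (f := fun p : (ℝ × ℝ × ℝ) × ℝ => (p.2, p.1.2.2)) (by fun_prop))

lemma resM_int (α L : ℝ) (hα : ∀ m : ℤ, α ≠ m) (hL : 0 < L) (B : ℝ) (hB : 0 ≤ B) (φ φ' : ℝ → ℂ) (hφ' : Continuous φ')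
    (hd : ∀ x, HasDerivAt φ (φ' x) x)
    (hq : φ L = Complex.exp ((2 * π * α : ℝ) * Complex.I) * φ 0) :
    ∫ β in (0:ℝ)..B, ∫ x in (0:ℝ)..L, β * ‖resM α L B β φ x‖ ^ 2 ≤
      (2 * π / (9 * √3)) * (L / (2 * π)) ^ 2 * ∫ x in (0:ℝ)..L, ‖φ' x‖ ^ 2 := by
  have hφ : Continuous φ := continuous_iff_continuousAt.2 fun x => (hd x).continuousAt
  have hp := cf_parseval α L hL φ hφ
  have hh : ∀ β, HasSum (fun k => β * ((1 - hM α B β k) ^ 2 * ‖cf α L φ k‖ ^ 2))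
      (β * (1 / L * ∫ x in (0:ℝ)..L, ‖resM α L B β φ x‖ ^ 2)) := fun β =>
    (res_parseval α L hL _ (hM_nonneg α B β) (hM_summable α hα B hB β) φ hφ).mul_left β
  have h1 := hasSum_int 0 B (fun k β => β * ((1 - hM α B β k) ^ 2 * ‖cf α L φ k‖ ^ 2))
    (fun k => by have := hM_cont α hα B k; fun_prop) (fun k => B * ‖cf α L φ k‖ ^ 2) (hp.summable.mul_left B)
    (fun k β hβ => by
      rw [Set.uIoc_of_le hB] at hβ
      have a1 := hM_nonneg α B β k
      have a2 := hM_le_one α hα B β k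
      have hβ0 := hβ.1.le
      rw [Real.norm_of_nonneg (by positivity)]
      apply mul_le_mul hβ.2 _ (by positivity) hB
      have : (1 - hM α B β k) ^ 2 ≤ 1 := by nlinarith
      nlinarith [sq_nonneg ‖cf α L φ k‖])
    _ (fun β _ => hh β)
  have h2 := (cf_deriv_sum α L hL φ φ' hφ' hd hq).mul_left (2 * π / (9 * √3))
  have h3 := hasSum_le (fun k => ?_) h1 h2
  · have e : ∫ β in (0:ℝ)..B, ∫ x in (0:ℝ)..L, β * ‖resM α L B β φ x‖ ^ 2 = L * 
       ∫ β in (0:ℝ)..B, (β * (1 / L * ∫ x in (0:ℝ)..L, ‖resM α L B β φ x‖ ^ 2)) := by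
      rw [← intervalIntegral.integral_const_mul]
      apply intervalIntegral.integral_congr
      intro β _
      simp only
      rw [intervalIntegral.integral_const_mul]; field_simp
    rw [e]
    calc _ ≤ _ := mul_le_mul_of_nonneg_left h3 hL.le
      _ = _ := by field_simp
  · have hpk := p_pos α hα k
    have h4 := J_scaled |(k:ℝ) + α| B hpk hB
    have e : ∫ β in (0:ℝ)..B, β * ((1 - hM α B β k) ^ 2 * ‖cf α L φ k‖ ^ 2) =
        (∫ b in (0:ℝ)..B, b * (|(k:ℝ) + α| ^ 3 / (|(k:ℝ) + α| ^ 3 + b ^ 3)) ^ 2) * ‖cf α L φ k‖ ^ 2 := by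
      rw [← intervalIntegral.integral_mul_const]
      apply intervalIntegral.integral_congr
      intro β hβ
      rw [Set.uIcc_of_le hB] at hβ
      have hβ0 := hβ.1
      simp only
      unfold hM
      rw [clB_eq B β hβ.1 hβ.2]
      have : |(k:ℝ) + α| ^ 3 + β ^ 3 ≠ 0 := by positivity
      have : 1 - β ^ 3 / (|(k:ℝ) + α| ^ 3 + β ^ 3) = |(k:ℝ) + α| ^ 3 / (|(k:ℝ) + α| ^ 3 + β ^ 3) := by
        field_simp; ring
      rw [this]; ring
    rw [e]
    calc _ ≤ _ := mul_le_mul_of_nonneg_right h4 (sq_nonneg _)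
      _ = _ := by ring

lemma minkowski_low (M : ℝ) (hM : 0 < M) (w s : ℝ → ℂ) (hw : Continuous w) (hs : Continuous s) (r q : ℝ)
    (hq : 0 < q) (hqr : q < r) (h1 : ∫ y in (0:ℝ)..M, ‖w y‖ ^ 2 = r ^ 2) (h2 : ∫ y in (0:ℝ)..M, ‖s y‖ ^ 2 ≤ q ^ 2) :
    (r - q) ^ 2 ≤ ∫ y in (0:ℝ)..M, ‖w y - s y‖ ^ 2 := by
  have hr : 0 < r := hq.trans hqr
  have hd : 0 < r - q := sub_pos.2 hqr
  have hpt : ∀ y, ‖w y‖ ^ 2 ≤ r / (r - q) * ‖w y - s y‖ ^ 2 + r / q * ‖s y‖ ^ 2 := by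
    intro y
    have h : ‖w y‖ ≤ ‖w y - s y‖ + ‖s y‖ := by simpa using norm_add_le (w y - s y) (s y)
    set a := ‖w y - s y‖
    set b := ‖s y‖
    have ha : 0 ≤ a := norm_nonneg _
    have hb : 0 ≤ b := norm_nonneg _
    have h3 : ‖w y‖ ^ 2 ≤ (a + b) ^ 2 := pow_le_pow_left₀ (norm_nonneg _) h 2
    refine h3.trans ?_
    have : r / (r - q) * a ^ 2 + r / q * b ^ 2 - (a + b) ^ 2 = (q * a - (r - q) * b) ^ 2 / (q * (r - q)) := by
      field_simp; ring
    have h4 : 0 ≤ (q * a - (r - q) * b) ^ 2 / (q * (r - q)) := by positivity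
    linarith
  have h3 : ∫ y in (0:ℝ)..M, ‖w y‖ ^ 2 ≤ ∫ y in (0:ℝ)..M, (r / (r - q) * ‖w y - s y‖ ^ 2 + r / q * ‖s y‖ ^ 2) := by
    apply intervalIntegral.integral_mono hM.le
    · exact Continuous.intervalIntegrable (by fun_prop) _ _
    · exact Continuous.intervalIntegrable (by fun_prop) _ _
    · exact hpt
  rw [intervalIntegral.integral_add (Continuous.intervalIntegrable (by fun_prop) _ _)
    (Continuous.intervalIntegrable (by fun_prop) _ _), intervalIntegral.integral_const_mul,
    intervalIntegral.integral_const_mul, h1] at h3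
  set A := ∫ y in (0:ℝ)..M, ‖w y - s y‖ ^ 2
  have h4 : r / q * ∫ y in (0:ℝ)..M, ‖s y‖ ^ 2 ≤ r / q * q ^ 2 := mul_le_mul_of_nonneg_left h2 (by positivity)
  have h5 : r / q * q ^ 2 = r * q := by field_simp
  have h6 : r * (r - q) ≤ r * (A / (r - q)) := by
    have : r / (r - q) * A = r * (A / (r - q)) := by ring
    nlinarith
  have h7 := le_of_mul_le_mul_left h6 hr
  rw [le_div_iff₀ hd] at h7
  nlinarith

lemma beta_int (lam c B : ℝ) (hl : 0 ≤ lam) (hc : 0 < c) (hB : lam / c ≤ B) (A : ℝ → ℝ) (hA : Continuous A)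
    (hA0 : ∀ β, 0 ≤ A β) (hlow : ∀ β, 0 < β → β < lam / c → (√lam - √(c * β)) ^ 2 ≤ A β) :
    lam ^ 3 / (30 * c ^ 2) ≤ ∫ β in (0:ℝ)..B, β * A β := by
  have hlc : 0 ≤ lam / c := by positivity
  have hi : ∀ a b, IntervalIntegrable (fun β => β * A β) volume a b := fun a b =>
    Continuous.intervalIntegrable (by fun_prop) _ _
  rw [← intervalIntegral.integral_add_adjacent_intervals (hi 0 (lam / c)) (hi (lam / c) B)]
  have h2 : 0 ≤ ∫ β in (lam / c)..B, β * A β := by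
    apply intervalIntegral.integral_nonneg hB
    intro u hu
    exact mul_nonneg (hlc.trans hu.1) (hA0 u)
  have h3 : ∫ β in (0:ℝ)..(lam / c), β * (√lam - √(c * β)) ^ 2 ≤ ∫ β in (0:ℝ)..(lam / c), β * A β := by
    apply intervalIntegral.integral_mono_on_of_le_Ioo hlc
    · exact Continuous.intervalIntegrable (by fun_prop) _ _
    · exact hi _ _
    · intro β hβ
      exact mul_le_mul_of_nonneg_left (hlow β hβ.1 hβ.2) hβ.1.le
  have h4 : ∫ β in (0:ℝ)..(lam / c), β * (√lam - √(c * β)) ^ 2 = lam ^ 3 / (30 * c ^ 2) := by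
    have := intervalIntegral.integral_eq_sub_of_hasDerivAt_of_le hlc
      (f := fun β => lam * β ^ 2 / 2 - 4 / 5 * √lam * (√(c * β) * β ^ 2) + c * β ^ 3 / 3)
      (f' := fun β => β * (√lam - √(c * β)) ^ 2) (Continuous.continuousOn (by fun_prop)) (fun β hβ => ?_)
      (Continuous.intervalIntegrable (by fun_prop) _ _)
    · rw [this]
      have e : c * (lam / c) = lam := by field_simp
      simp only [e]
      have e2 := Real.mul_self_sqrt hl
      have e3 : 4 / 5 * √lam * (√lam * (lam / c) ^ 2) = 4 / 5 * lam * (lam / c) ^ 2 := by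
        linear_combination (4 / 5 * (lam / c) ^ 2) * e2
      rw [e3]
      field_simp; ring
    · have hb := hβ.1
      have hcb : 0 < c * β := by positivity
      have d1 : HasDerivAt (fun β => lam * β ^ 2 / 2) (lam * β) β :=
        (((hasDerivAt_pow 2 β).const_mul lam).div_const 2).congr_deriv (by push_cast; ring)
      have d2 : HasDerivAt (fun β => √(c * β)) (c / (2 * √(c * β))) β := by
        have : HasDerivAt (fun β => c * β) c β := by simpa using (hasDerivAt_id β).const_mul c
        exact this.sqrt hcb.ne'
      have d3 : HasDerivAt (fun β => c * β ^ 3 / 3) (c * β ^ 2) β :=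
        (((hasDerivAt_pow 3 β).const_mul c).div_const 3).congr_deriv (by push_cast; ring)
      have d4 := (d2.mul (hasDerivAt_pow 2 β)).const_mul (4 / 5 * √lam)
      refine ((d1.sub d4).add d3).congr_deriv ?_
      have hs : 0 < √(c * β) := Real.sqrt_pos.2 hcb
      have e2 := Real.mul_self_sqrt hl
      have e3 := Real.mul_self_sqrt hcb.le
      have e4 : c / (2 * √(c * β)) * β ^ 2 = √(c * β) * β / 2 := by
        rw [div_mul_eq_mul_div, div_eq_div_iff (by positivity) (by norm_num)]
        linear_combination (-2 * β) * e3
      push_cast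
      rw [e4]
      linear_combination (-β) * e2 - β * e3
  linarith

lemma sOp_rot {ι : Type} [Fintype ι] (V : Matrix ι ι ℂ) (L : ℝ) (H : ℝ → ℂ) (hH : Continuous H)
    (φ : ι → ℝ → ℂ) (hφ : ∀ n, Continuous (φ n)) (x : ℝ) (i : ι) :
    rot V (fun n => sOp L H (φ n) x) i = sOp L H (fun t => rot V (fun n => φ n t) i) x := by
  unfold rot sOp
  simp_rw [Finset.mul_sum]
  rw [intervalIntegral.integral_finsetSum, Finset.mul_sum]
  · refine Finset.sum_congr rfl fun n _ => ?_
    simp_rw [mul_left_comm (H _)]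
    rw [intervalIntegral.integral_const_mul]; ring
  · intro n _
    have := hφ n
    exact Continuous.intervalIntegrable (by fun_prop) _ _

lemma resM_rot {ι : Type} [Fintype ι] (V : Matrix ι ι ℂ) (α L : ℝ) (hα : ∀ m : ℤ, α ≠ m) (B β : ℝ) (hB : 0 ≤ B)
    (φ : ι → ℝ → ℂ) (hφ : ∀ n, Continuous (φ n)) (x : ℝ) (i : ι) :
    rot V (fun n => resM α L B β (φ n) x) i = resM α L B β (fun t => rot V (fun n => φ n t) i) x := by
  have hk := ker_cont α L _ (hM_nonneg α B β) (hM_summable α hα B hB β)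
  unfold resM
  rw [← sOp_rot V L _ hk φ hφ x i]
  unfold rot
  simp_rw [mul_sub]
  rw [Finset.sum_sub_distrib]


lemma swap3 (g : ℝ → ℝ → ℝ → ℝ) (hg : Continuous (fun q : ℝ × ℝ × ℝ => g q.1 q.2.1 q.2.2)) (B L M : ℝ) :
    ∫ x in (0:ℝ)..L, ∫ β in (0:ℝ)..B, ∫ y in (0:ℝ)..M, g β x y =
      ∫ y in (0:ℝ)..M, ∫ β in (0:ℝ)..B, ∫ x in (0:ℝ)..L, g β x y := by
  rw [swap_cont (fun x β => ∫ y in (0:ℝ)..M, g β x y)]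
  · have : ∀ β, ∫ x in (0:ℝ)..L, ∫ y in (0:ℝ)..M, g β x y = ∫ y in (0:ℝ)..M, ∫ x in (0:ℝ)..L, g β x y := by
      intro β
      apply swap_cont (fun x y => g β x y)
      exact hg.comp (f := fun p : ℝ × ℝ => (β, p.1, p.2)) (by fun_prop)
    simp_rw [this]
    apply swap_cont (fun β y => ∫ x in (0:ℝ)..L, g β x y)
    apply cont_int (fun (p : ℝ × ℝ) x => g p.1 x p.2)
    exact hg.comp (f := fun p : (ℝ × ℝ) × ℝ => (p.1.1, p.2, p.1.2)) (by fun_prop)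
  · apply cont_int (fun (p : ℝ × ℝ) y => g p.2 p.1 y)
    exact hg.comp (f := fun p : (ℝ × ℝ) × ℝ => (p.1.2, p.1.1, p.2)) (by fun_prop)

lemma fibre_K2 {ι : Type} [Fintype ι] [DecidableEq ι] (α L : ℝ) (hα : ∀ m : ℤ, α ≠ m) (hL : 0 < L)
    (M : ℝ) (hM0 : 0 < M) (v : ι → ℝ → ℝ → ℂ)
    (hv : ∀ n, Continuous (fun p : ℝ × ℝ => v n p.1 p.2))
    (ho : ∀ n m, ∫ x in (0:ℝ)..L, ∫ y in (0:ℝ)..M, v n x y * (starRingEnd ℂ) (v m x y)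
      = if n = m then 1 else 0) (B : ℝ) (hB : 0 ≤ B) (x : ℝ)
    (hBx : (∑ n, ∫ y in (0:ℝ)..M, ‖v n x y‖ ^ 2) / (supF α / L) ≤ B) :
    ((gramM M v x) ^ 3).trace.re / (30 * (supF α / L) ^ 2) ≤
      ∫ β in (0:ℝ)..B, ∫ y in (0:ℝ)..M, ∑ n, β * ‖resM α L B β (fun t => v n t y) x‖ ^ 2 := by
  obtain ⟨V, lam, h1, h2, -, h4, -, h6, h7⟩ := gram_diag M hM0 v hv x
  have hS := supF_pos α hα
  set c := supF α / L with hc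
  have hc0 : 0 < c := by positivity
  have hvy : ∀ n y, Continuous (fun t => v n t y) := fun n y =>
    (hv n).comp (f := fun t : ℝ => (t, y)) (by fun_prop)
  have hvx : ∀ n x, Continuous (fun y => v n x y) := fun n x =>
    (hv n).comp (f := fun t : ℝ => (x, t)) (by fun_prop)
  set w : ι → ℝ → ℝ → ℂ := fun i t y => rot V (fun n => v n t y) i with hw
  have hwc : ∀ i, Continuous (fun p : ℝ × ℝ => w i p.1 p.2) := fun i =>
    rot_cont V (fun n (p : ℝ × ℝ) => v n p.1 p.2) hv i
  have hr3 : ∀ i, Continuous (fun q : ℝ × ℝ × ℝ => resM α L B q.1 (fun t => w i t q.2.2) q.2.1) := fun i =>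
    resM_cont3 α L hα B hB _ (hwc i)
  have hr2 : ∀ i, Continuous (fun q : ℝ × ℝ => resM α L B q.1 (fun t => w i t q.2) x) := fun i =>
    (hr3 i).comp (f := fun q : ℝ × ℝ => (q.1, x, q.2)) (by fun_prop)
  have hsum : ∑ i, lam i = ∑ n, ∫ y in (0:ℝ)..M, ‖v n x y‖ ^ 2 := by
    simp_rw [← h6]
    rw [← intervalIntegral.integral_finsetSum, ← intervalIntegral.integral_finsetSum]
    · simp_rw [rot_norm V h1]
    · intro n _; have := hvx n x; exact Continuous.intervalIntegrable (by fun_prop) _ _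
    · intro n _
      have := rot_cont V (fun n y => v n x y) (fun n => hvx n x) n
      exact Continuous.intervalIntegrable (by fun_prop) _ _
  have hlam : ∀ i, lam i / c ≤ B := by
    intro i
    refine le_trans ?_ hBx
    rw [← hsum]
    exact div_le_div_of_nonneg_right (Finset.single_le_sum (fun j _ => h7 j) (Finset.mem_univ i)) hc0.le
  have hA : ∀ i, lam i ^ 3 / (30 * c ^ 2) ≤
      ∫ β in (0:ℝ)..B, β * ∫ y in (0:ℝ)..M, ‖resM α L B β (fun t => w i t y) x‖ ^ 2 := by
    intro i
    have hri := hr2 i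
    apply beta_int (lam i) c B (h7 i) hc0 (hlam i)
    · exact cont_int (fun β y => ‖resM α L B β (fun t => w i t y) x‖ ^ 2) (by fun_prop) 0 M
    · intro β
      exact intervalIntegral.integral_nonneg hM0.le fun _ _ => by positivity
    · intro β hβ0 hβ1
      have hβB : β ≤ B := hβ1.le.trans (hlam i)
      have hcb : c * β < lam i := by rw [lt_div_iff₀ hc0] at hβ1; linarith
      have hk := ker_cont α L _ (hM_nonneg α B β) (hM_summable α hα B hB β)
      have hsc : Continuous (fun p : ℝ × ℝ => sOp L (kerH α L (hM α B β)) (fun t => w i t p.2) p.1) := by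
        unfold sOp
        refine Continuous.const_mul ?_ _
        apply cont_int (fun (q : ℝ × ℝ) t => kerH α L (hM α B β) (q.1 - t) * w i t q.2)
        exact (hk.comp (by fun_prop)).mul ((hwc i).comp (f := fun p : (ℝ × ℝ) × ℝ => (p.2, p.1.2)) (by fun_prop))
      apply minkowski_low M hM0 (fun y => w i x y) (fun y => sOp L (kerH α L (hM α B β)) (fun t => w i t y) x)
      · exact (hwc i).comp (f := fun t : ℝ => (x, t)) (by fun_prop)
      · exact hsc.comp (f := fun t : ℝ => (x, t)) (by fun_prop)
      · exact Real.sqrt_pos.2 (by positivity)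
      · exact Real.sqrt_lt_sqrt (by positivity) hcb
      · rw [Real.sq_sqrt (h7 i)]; exact h6 i
      · rw [Real.sq_sqrt (by positivity)]
        have hQ := hM_sq α hα B β hβ0.le hβB
        have hle : ∀ y, ‖sOp L (kerH α L (hM α B β)) (fun t => w i t y) x‖ ^ 2 ≤
            (c * β) * ∫ t in (0:ℝ)..L, ‖w i t y‖ ^ 2 := by
          intro y
          have hwy : Continuous (fun t => w i t y) := (hwc i).comp (f := fun t : ℝ => (t, y)) (by fun_prop)
          have h := sOp_le α L hL _ (hM_nonneg α B β) (hM_summable α hα B hB β) _ hQ (fun t => w i t y) hwy x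
          refine h.trans ?_
          have h0 : 0 ≤ ∫ t in (0:ℝ)..L, ‖w i t y‖ ^ 2 := intervalIntegral.integral_nonneg hL.le fun _ _ => by positivity
          rw [← mul_assoc]
          apply mul_le_mul_of_nonneg_right _ h0
          rw [hc, mul_one_div, div_mul_eq_mul_div]
          apply div_le_div_of_nonneg_right _ hL.le
          have := Fsum_le_supF α hα β hβ0.le
          nlinarith
        have hwi := hwc i
        have hIntg := intervalIntegral.integral_mono (μ := volume) (a := 0) (b := M) hM0.le
          (f := fun y => ‖sOp L (kerH α L (hM α B β)) (fun t => w i t y) x‖ ^ 2)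
          (g := fun y => (c * β) * ∫ t in (0:ℝ)..L, ‖w i t y‖ ^ 2)
          (((hsc.comp (f := fun t : ℝ => (x, t)) (by fun_prop)).norm.pow 2).intervalIntegrable _ _)
          ((Continuous.const_mul (cont_int (fun y t => ‖w i t y‖ ^ 2) ((hwi.comp (f := fun p : ℝ × ℝ => (p.2, p.1)) (by fun_prop)).norm.pow 2) 0 L) _).intervalIntegrable _ _)
          hle
        refine hIntg.trans ?_
        rw [intervalIntegral.integral_const_mul]
        have hsw := swap_cont (fun t y => ‖w i t y‖ ^ 2) (by fun_prop) 0 L 0 M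
        have ho' := rot_orth V h2 L M v hv ho i
        rw [← hsw, ho', mul_one]
  have hpt : ∀ β y, ∑ n, β * ‖resM α L B β (fun t => v n t y) x‖ ^ 2 = ∑ i, β * ‖resM α L B β (fun t => w i t y) x‖ ^ 2 := by
    intro β y
    rw [← Finset.mul_sum, ← Finset.mul_sum, ← rot_norm V h1]
    congr 1
    refine Finset.sum_congr rfl fun i _ => ?_
    rw [resM_rot V α L hα B β hB (fun n t => v n t y) (fun n => hvy n y)]
  simp_rw [hpt]
  rw [h4, Finset.sum_div]
  calc _ ≤ ∑ i, ∫ β in (0:ℝ)..B, β * ∫ y in (0:ℝ)..M, ‖resM α L B β (fun t => w i t y) x‖ ^ 2 :=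
        Finset.sum_le_sum fun i _ => hA i
    _ = _ := by
      rw [← intervalIntegral.integral_finsetSum]
      · apply intervalIntegral.integral_congr
        intro β _
        simp only
        rw [intervalIntegral.integral_finsetSum]
        · simp_rw [intervalIntegral.integral_const_mul]
        · intro i _
          have hri := (hr2 i).comp (f := fun y : ℝ => (β, y)) (by fun_prop)
          exact ((hri.norm.pow 2).const_mul β).intervalIntegrable _ _
      · intro i _
        have hri := hr2 i
        have := cont_int (fun β y => ‖resM α L B β (fun t => w i t y) x‖ ^ 2) (by fun_prop) 0 M
        exact (continuous_id.mul this).intervalIntegrable _ _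

theorem LT1D_K2 (α L : ℝ) (hL : 0 < L) (hα : ∀ m : ℤ, α ≠ m) : LT1D (K2 α) α L := by
  intro ι _ _ M hM0 v v' hv hv' hd hq ho
  have hS := supF_pos α hα
  set c := supF α / L with hc
  have hc0 : 0 < c := by positivity
  have hTc : Continuous (fun x => (∑ n, ∫ y in (0:ℝ)..M, ‖v n x y‖ ^ 2) / c) := by
    refine Continuous.div_const (continuous_finsetSum _ fun n _ => ?_) _
    have := hv n
    exact cont_int (fun x y => ‖v n x y‖ ^ 2) (by fun_prop) 0 M
  obtain ⟨B, hB⟩ := (isCompact_Icc (a := (0:ℝ)) (b := L)).exists_bound_of_continuousOn hTc.continuousOn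
  have hB0 : 0 ≤ B := (norm_nonneg _).trans (hB 0 ⟨le_rfl, hL.le⟩)
  have hr3 : ∀ n, Continuous (fun q : ℝ × ℝ × ℝ => resM α L B q.1 (fun t => v n t q.2.2) q.2.1) := fun n =>
    resM_cont3 α L hα B hB0 _ (hv n)
  set g : ℝ → ℝ → ℝ → ℝ := fun β x y => ∑ n, β * ‖resM α L B β (fun t => v n t y) x‖ ^ 2 with hg
  have hgc : Continuous (fun q : ℝ × ℝ × ℝ => g q.1 q.2.1 q.2.2) := by
    rw [hg]
    exact continuous_finsetSum _ fun n _ => continuous_fst.mul ((hr3 n).norm.pow 2)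
  have hfib : ∀ x ∈ Set.Icc 0 L, ((gramM M v x) ^ 3).trace.re ≤
      (30 * c ^ 2) * ∫ β in (0:ℝ)..B, ∫ y in (0:ℝ)..M, g β x y := by
    intro x hx
    have := fibre_K2 α L hα hL M hM0 v hv ho B hB0 x ((le_abs_self _).trans (hB x hx))
    rw [div_le_iff₀ (by positivity)] at this
    rw [mul_comm]; exact this
  have h1 : ∫ x in (0:ℝ)..L, ((gramM M v x) ^ 3).trace.re ≤
      ∫ x in (0:ℝ)..L, (30 * c ^ 2) * ∫ β in (0:ℝ)..B, ∫ y in (0:ℝ)..M, g β x y := by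
    apply intervalIntegral.integral_mono_on hL.le
    · exact (trace_gram_cont M v hv).intervalIntegrable _ _
    · refine (Continuous.const_mul ?_ _).intervalIntegrable _ _
      apply cont_int (fun x β => ∫ y in (0:ℝ)..M, g β x y)
      apply cont_int (fun (p : ℝ × ℝ) y => g p.2 p.1 y)
      exact hgc.comp (f := fun p : (ℝ × ℝ) × ℝ => (p.1.2, p.1.1, p.2)) (by fun_prop)
    · exact hfib
  refine h1.trans ?_
  rw [intervalIntegral.integral_const_mul, swap3 g hgc B L M]
  have h2 : ∀ y, ∫ β in (0:ℝ)..B, ∫ x in (0:ℝ)..L, g β x y ≤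
      ∑ n, (2 * π / (9 * √3)) * (L / (2 * π)) ^ 2 * ∫ x in (0:ℝ)..L, ‖v' n x y‖ ^ 2 := by
    intro y
    have hc2 : ∀ n, Continuous (fun p : ℝ × ℝ => p.1 * ‖resM α L B p.1 (fun t => v n t y) p.2‖ ^ 2) := fun n =>
      continuous_fst.mul (((hr3 n).comp (f := fun p : ℝ × ℝ => (p.1, p.2, y)) (by fun_prop)).norm.pow 2)
    have e : ∫ β in (0:ℝ)..B, ∫ x in (0:ℝ)..L, g β x y =
        ∑ n, ∫ β in (0:ℝ)..B, ∫ x in (0:ℝ)..L, β * ‖resM α L B β (fun t => v n t y) x‖ ^ 2 := by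
      rw [← intervalIntegral.integral_finsetSum]
      · apply intervalIntegral.integral_congr
        intro β _
        simp only [hg]
        rw [intervalIntegral.integral_finsetSum]
        intro n _
        exact ((hc2 n).comp (f := fun x : ℝ => (β, x)) (by fun_prop)).intervalIntegrable _ _
      · intro n _
        exact (cont_int (fun β x => β * ‖resM α L B β (fun t => v n t y) x‖ ^ 2) (hc2 n) 0 L).intervalIntegrable _ _
    rw [e]
    refine Finset.sum_le_sum fun n _ => ?_
    refine resM_int α L hα hL B hB0 (fun t => v n t y) (fun t => v' n t y)
      ((hv' n).comp (f := fun t : ℝ => (t, y)) (by fun_prop)) (fun x => hd n x y) ?_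
    have := hq n 0 y
    rw [zero_add] at this; exact this
  have hv'2 : ∀ n, Continuous (fun y => ∫ x in (0:ℝ)..L, ‖v' n x y‖ ^ 2) := fun n =>
    cont_int (fun y x => ‖v' n x y‖ ^ 2) (((hv' n).comp (f := fun p : ℝ × ℝ => (p.2, p.1)) (by fun_prop)).norm.pow 2) 0 L
  have h3 : ∫ y in (0:ℝ)..M, ∫ β in (0:ℝ)..B, ∫ x in (0:ℝ)..L, g β x y ≤
      ∫ y in (0:ℝ)..M, ∑ n, (2 * π / (9 * √3)) * (L / (2 * π)) ^ 2 * ∫ x in (0:ℝ)..L, ‖v' n x y‖ ^ 2 := by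
    apply intervalIntegral.integral_mono hM0.le
    · refine Continuous.intervalIntegrable ?_ _ _
      apply cont_int (fun y β => ∫ x in (0:ℝ)..L, g β x y)
      apply cont_int (fun (p : ℝ × ℝ) x => g p.2 x p.1)
      exact hgc.comp (f := fun p : (ℝ × ℝ) × ℝ => (p.1.2, p.2, p.1.1)) (by fun_prop)
    · exact (continuous_finsetSum _ fun n _ => (hv'2 n).const_mul _).intervalIntegrable _ _
    · exact h2
  have e : ∫ y in (0:ℝ)..M, ∑ n, (2 * π / (9 * √3)) * (L / (2 * π)) ^ 2 * ∫ x in (0:ℝ)..L, ‖v' n x y‖ ^ 2 =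
      (2 * π / (9 * √3)) * (L / (2 * π)) ^ 2 * ∑ n, ∫ x in (0:ℝ)..L, ∫ y in (0:ℝ)..M, ‖v' n x y‖ ^ 2 := by
    rw [intervalIntegral.integral_finsetSum, Finset.mul_sum]
    · refine Finset.sum_congr rfl fun n _ => ?_
      have := hv' n
      rw [intervalIntegral.integral_const_mul, swap_cont (fun x y => ‖v' n x y‖ ^ 2) (by fun_prop)]
    · intro n _
      exact ((hv'2 n).const_mul _).intervalIntegrable _ _
  rw [e] at h3
  refine (mul_le_mul_of_nonneg_left h3 (by positivity)).trans (le_of_eq ?_)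
  rw [← mul_assoc]
  congr 1
  unfold K2
  rw [hc]
  field_simp
  norm_num

lemma K2_pos (α : ℝ) (hα : ∀ m : ℤ, α ≠ m) : 0 < K2 α := by
  have := supF_pos α hα
  unfold K2; positivity

theorem LT1D_min (α L : ℝ) (hL : 0 < L) (hα : ∀ m : ℤ, α ≠ m) : LT1D (Kmin α) α L := by
  unfold Kmin
  rcases min_choice (kConst α ^ 2) (K2 α) with h | h <;> rw [h]
  · exact LT1D_K1 α L hL hα
  · exact LT1D_K2 α L hL hα

lemma Kmin_pos (α : ℝ) (hα : ∀ m : ℤ, α ≠ m) : 0 < Kmin α := by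
  unfold Kmin
  refine lt_min ?_ (K2_pos α hα)
  have h := kConst_bound α hα 1
  have hs : 0 < Real.sinh 1 := Real.sinh_pos_iff.2 one_pos
  have : kConst α ≠ 0 := by
    intro h0; rw [h0] at h; linarith
  positivity


lemma ii_bdd (f : ℝ → ℝ) (a b C : ℝ) (hf : Measurable f) (hb : ∀ x ∈ Set.uIoc a b, |f x| ≤ C) :
    IntervalIntegrable f volume a b := by
  refine IntervalIntegrable.mono_fun (intervalIntegrable_const (c := C)) hf.aestronglyMeasurable ?_
  rw [Filter.EventuallyLE, ae_restrict_iff' measurableSet_uIoc]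
  refine ae_of_all _ fun x hx => ?_
  rw [Real.norm_eq_abs, Real.norm_eq_abs]
  exact (hb x hx).trans (le_abs_self C)

lemma swap_bdd (F : ℝ → ℝ → ℝ) (hF : Measurable (Function.uncurry F)) (a b c d C : ℝ)
    (hb : ∀ x ∈ Set.uIoc a b, ∀ y ∈ Set.uIoc c d, |F x y| ≤ C) :
    ∫ x in a..b, ∫ y in c..d, F x y = ∫ y in c..d, ∫ x in a..b, F x y := by
  apply MeasureTheory.intervalIntegral_intervalIntegral_swap
  refine Measure.integrableOn_of_bounded (M := C) ?_ hF.aestronglyMeasurable ?_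
  · rw [Measure.volume_eq_prod, Measure.prod_prod]
    exact ENNReal.mul_ne_top (by simp [Set.uIoc]) (by simp [Set.uIoc])
  · rw [ae_restrict_iff' (measurableSet_uIoc.prod measurableSet_uIoc)]
    exact ae_of_all _ fun p hp => hb p.1 hp.1 p.2 hp.2

lemma imono (f g : ℝ → ℝ) (a b : ℝ) (hab : a ≤ b) (h0 : ∀ x ∈ Set.Ioc a b, 0 ≤ f x)
    (hg : IntervalIntegrable g volume a b) (h : ∀ x ∈ Set.Ioc a b, f x ≤ g x) :
    ∫ x in a..b, f x ≤ ∫ x in a..b, g x := by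
  rw [intervalIntegral.integral_of_le hab, intervalIntegral.integral_of_le hab]
  apply integral_mono_of_nonneg
  · rw [Filter.EventuallyLE, ae_restrict_iff' measurableSet_Ioc]
    exact ae_of_all _ h0
  · exact (intervalIntegrable_iff_integrableOn_Ioc_of_le hab).1 hg
  · rw [Filter.EventuallyLE, ae_restrict_iff' measurableSet_Ioc]
    exact ae_of_all _ h

lemma int_chi (p : ℝ → ℝ) (hp : Continuous p) (l S : ℝ) (hl : 0 ≤ l) (hlS : l ≤ S) :
    ∫ s in (0:ℝ)..S, (if s < l then p s else 0) = ∫ s in (0:ℝ)..l, p s := by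
  have hm : Measurable (fun s => if s < l then p s else 0) :=
    Measurable.ite measurableSet_Iio hp.measurable measurable_const
  have hi : ∀ a b, IntervalIntegrable (fun s => if s < l then p s else 0) volume a b := by
    intro a b
    obtain ⟨C, hC⟩ := (isCompact_uIcc (a := a) (b := b)).exists_bound_of_continuousOn hp.continuousOn
    apply ii_bdd _ a b C hm
    intro x hx
    have := hC x (Set.uIoc_subset_uIcc hx)
    rw [Real.norm_eq_abs] at this
    split_ifs
    · exact this
    · rw [abs_zero]; exact (abs_nonneg _).trans this
  rw [← intervalIntegral.integral_add_adjacent_intervals (hi 0 l) (hi l S)]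
  have h1 : ∫ s in (0:ℝ)..l, (if s < l then p s else 0) = ∫ s in (0:ℝ)..l, p s :=
    intervalIntegral.integral_congr_Ioo_of_le hl fun s hs => if_pos hs.2
  have h2 : ∫ s in l..S, (if s < l then p s else 0) = ∫ s in l..S, (0:ℝ) :=
    intervalIntegral.integral_congr_Ioo_of_le hlS fun s hs => if_neg (not_lt.2 hs.1.le)
  rw [h1, h2]; simp

lemma int_q1 : ∫ t in (0:ℝ)..1, (√(1 - t ^ 2)) ^ 3 = 3 * π / 16 := by
  have := intervalIntegral.integral_eq_sub_of_hasDerivAt_of_le (zero_le_one (α := ℝ))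
      (f := fun t => t * (5 - 2 * t ^ 2) / 8 * √(1 - t ^ 2) + 3 / 8 * Real.arcsin t)
      (f' := fun t => (√(1 - t ^ 2)) ^ 3) 
      (Continuous.continuousOn (by have := Real.continuous_arcsin; fun_prop)) (fun t ht => ?_)
      (Continuous.intervalIntegrable (by fun_prop) _ _)
  · rw [this]; simp; ring
  · have h1 : 0 < 1 - t ^ 2 := by nlinarith [ht.1, ht.2]
    have d1 : HasDerivAt (fun t : ℝ => t * (5 - 2 * t ^ 2) / 8) ((5 - 6 * t ^ 2) / 8) t := by
      have := (hasDerivAt_id t).mul (((hasDerivAt_pow 2 t).const_mul 2).const_sub 5)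
      exact (this.div_const 8).congr_deriv (by simp; ring)
    have d2 : HasDerivAt (fun t : ℝ => √(1 - t ^ 2)) (-(2 * t) / (2 * √(1 - t ^ 2))) t := by
      have : HasDerivAt (fun t : ℝ => 1 - t ^ 2) (-(2 * t)) t :=
        ((hasDerivAt_pow 2 t).const_sub 1).congr_deriv (by simp)
      exact this.sqrt h1.ne'
    have d3 := (Real.hasDerivAt_arcsin (x := t) (by linarith [ht.1]) (by linarith [ht.2])).const_mul (3 / 8)
    refine ((d1.mul d2).add d3).congr_deriv ?_
    have hs : 0 < √(1 - t ^ 2) := Real.sqrt_pos.2 h1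
    have e := Real.sq_sqrt h1.le
    set z := √(1 - t ^ 2)
    have ht2 : t ^ 2 = 1 - z ^ 2 := by linarith
    field_simp
    ring_nf
    have ht4 : t ^ 4 = (1 - z ^ 2) ^ 2 := by rw [← ht2]; ring
    rw [ht4, ht2]; ring

lemma int_q (T : ℝ) (hT : 0 ≤ T) : ∫ t in (0:ℝ)..T, (√(1 - t ^ 2)) ^ 3 ≤ 3 * π / 16 := by
  have hi : ∀ a b, IntervalIntegrable (fun t : ℝ => (√(1 - t ^ 2)) ^ 3) volume a b := fun a b =>
    Continuous.intervalIntegrable (by fun_prop) _ _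
  have h1 := intervalIntegral.integral_add_adjacent_intervals (hi 0 T) (hi T (max T 1))
  have h2 := intervalIntegral.integral_add_adjacent_intervals (hi 0 1) (hi 1 (max T 1))
  have h3 : 0 ≤ ∫ t in T..(max T 1), (√(1 - t ^ 2)) ^ 3 :=
    intervalIntegral.integral_nonneg (le_max_left _ _) fun _ _ => by positivity
  have h4 : ∫ t in (1:ℝ)..(max T 1), (√(1 - t ^ 2)) ^ 3 = ∫ t in (1:ℝ)..(max T 1), (0:ℝ) := by
    apply intervalIntegral.integral_congr
    intro t ht
    rw [Set.uIcc_of_le (le_max_right _ _)] at ht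
    simp only
    rw [Real.sqrt_eq_zero_of_nonpos (by nlinarith [ht.1])]; norm_num
  rw [intervalIntegral.integral_zero] at h4
  rw [int_q1] at h2
  linarith

lemma int_qV (V κ S : ℝ) (hV : 0 < V) (hκ : 0 < κ) (hS : 0 ≤ S) :
    ∫ s in (0:ℝ)..S, (√(V - κ * s ^ 2)) ^ 3 ≤ V ^ 2 / √κ * (3 * π / 16) := by
  set r := √V with hr
  set m := √κ with hm
  have hr0 : 0 < r := Real.sqrt_pos.2 hV
  have hm0 : 0 < m := Real.sqrt_pos.2 hκ
  have hrV : V = r ^ 2 := (Real.sq_sqrt hV.le).symm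
  have hmk : κ = m ^ 2 := (Real.sq_sqrt hκ.le).symm
  have h := int_q (m / r * S) (by positivity)
  have e : ∀ s, (√(V - κ * s ^ 2)) ^ 3 = r ^ 3 * (√(1 - (m / r * s) ^ 2)) ^ 3 := by
    intro s
    have : V - κ * s ^ 2 = r ^ 2 * (1 - (m / r * s) ^ 2) := by
      rw [hrV, hmk]; field_simp
    rw [this, Real.sqrt_mul (sq_nonneg r), Real.sqrt_sq hr0.le, mul_pow]
  simp_rw [e]
  rw [intervalIntegral.integral_const_mul,
    intervalIntegral.integral_comp_mul_left (fun t => (√(1 - t ^ 2)) ^ 3) (by positivity : m / r ≠ 0), mul_zero, smul_eq_mul]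
  rw [hrV]
  calc _ ≤ r ^ 3 * ((m / r)⁻¹ * (3 * π / 16)) := by gcongr
    _ = _ := by field_simp

lemma young3 (f u η : ℝ) (hf : 0 ≤ f) (hη : 0 < η) :
    f * u ≤ η * f ^ 3 + 2 / (3 * √(3 * η)) * (√u) ^ 3 := by
  set m := √(3 * η) with hm
  have hm0 : 0 < m := Real.sqrt_pos.2 (by positivity)
  have hmk : m ^ 2 = 3 * η := Real.sq_sqrt (by positivity)
  have hz := Real.sqrt_nonneg u
  have hu : u ≤ √u ^ 2 := by
    rcases le_total 0 u with h | h
    · rw [Real.sq_sqrt h]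
    · exact h.trans (sq_nonneg _)
  set z := √u
  have h1 : f * u ≤ f * z ^ 2 := mul_le_mul_of_nonneg_left hu hf
  refine h1.trans ?_
  have h2 : η * f ^ 3 + 2 / (3 * m) * z ^ 3 - f * z ^ 2 = (m * f - z) ^ 2 * (m * f + 2 * z) / (3 * m) := by
    have : η = m ^ 2 / 3 := by linarith
    rw [this]; field_simp; ring
  have h3 : 0 ≤ (m * f - z) ^ 2 * (m * f + 2 * z) / (3 * m) := by positivity
  linarith

/-- Step function attached to weights `a` and levels `lam`. -/
noncomputable def stepF {ι : Type} [Fintype ι] (a lam : ι → ℝ) (s : ℝ) : ℝ := ∑ i, if s < lam i then a i else 0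

lemma stepF_meas {ι : Type} [Fintype ι] (a lam : ι → ℝ) : Measurable (stepF a lam) := by
  unfold stepF
  exact Finset.measurable_sum _ fun i _ => Measurable.ite measurableSet_Iio measurable_const measurable_const

lemma stepF_nonneg {ι : Type} [Fintype ι] (a lam : ι → ℝ) (ha : ∀ i, 0 ≤ a i) (s : ℝ) : 0 ≤ stepF a lam s :=
  Finset.sum_nonneg fun i _ => by split_ifs; exacts [ha i, le_rfl]

lemma stepF_le {ι : Type} [Fintype ι] (a lam : ι → ℝ) (ha : ∀ i, 0 ≤ a i) (s : ℝ) : stepF a lam s ≤ ∑ i, a i :=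
  Finset.sum_le_sum fun i _ => by split_ifs; exacts [le_rfl, ha i]

lemma layer {ι : Type} [Fintype ι] (a lam : ι → ℝ) (ha : ∀ i, 0 ≤ a i) (hl : ∀ i, 0 ≤ lam i) (S : ℝ) (hS : 0 ≤ S)
    (hlS : ∀ i, lam i ≤ S) (η κ : ℝ) (hη : 0 < η) (hκ : 0 < κ) :
    2 * √3 * √(η * κ) / π * (∑ i, a i * lam i) ^ 2 ≤
      η * (∫ s in (0:ℝ)..S, stepF a lam s ^ 3) + κ / 3 * ∑ i, a i * lam i ^ 3 := by
  set ρ := ∑ i, a i * lam i with hρ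
  have hm := stepF_meas a lam
  have h0 := stepF_nonneg a lam ha
  have hle := stepF_le a lam ha
  have hI3 : IntervalIntegrable (fun s => stepF a lam s ^ 3) volume 0 S := by
    apply ii_bdd _ _ _ ((∑ i, a i) ^ 3) (hm.pow_const 3)
    intro s _
    rw [abs_of_nonneg (pow_nonneg (h0 s) 3)]
    exact pow_le_pow_left₀ (h0 s) (hle s) 3
  have hp3 : 0 ≤ ∫ s in (0:ℝ)..S, stepF a lam s ^ 3 :=
    intervalIntegral.integral_nonneg hS fun s _ => pow_nonneg (h0 s) 3
  have hs3 : 0 ≤ ∑ i, a i * lam i ^ 3 := Finset.sum_nonneg fun i _ => mul_nonneg (ha i) (pow_nonneg (hl i) 3)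
  have hρ0 : 0 ≤ ρ := Finset.sum_nonneg fun i _ => mul_nonneg (ha i) (hl i)
  rcases hρ0.eq_or_lt with h | hρpos
  · rw [← h]
    have : 0 ≤ η * (∫ s in (0:ℝ)..S, stepF a lam s ^ 3) + κ / 3 * ∑ i, a i * lam i ^ 3 := by positivity
    simpa using this
  set m := √(η * κ) with hmd
  have hm0 : 0 < m := Real.sqrt_pos.2 (by positivity)
  have h30 : (0:ℝ) < √3 := by positivity
  set V := 4 * √3 * m / π * ρ with hV
  have hV0 : 0 < V := by have := Real.pi_pos; positivity
  have key : ∀ p : ℝ → ℝ, Continuous p → ∫ s in (0:ℝ)..S, stepF a lam s * p s = ∑ i, a i * ∫ s in (0:ℝ)..lam i, p s := by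
    intro p hp
    have e : ∀ s, stepF a lam s * p s = ∑ i, if s < lam i then a i * p s else 0 := by
      intro s
      unfold stepF
      rw [Finset.sum_mul]
      refine Finset.sum_congr rfl fun i _ => ?_
      split_ifs <;> simp
    simp_rw [e]
    obtain ⟨C, hC⟩ := (isCompact_uIcc (a := (0:ℝ)) (b := S)).exists_bound_of_continuousOn hp.continuousOn
    rw [intervalIntegral.integral_finsetSum]
    · refine Finset.sum_congr rfl fun i _ => ?_
      rw [int_chi (fun s => a i * p s) (by fun_prop) (lam i) S (hl i) (hlS i), intervalIntegral.integral_const_mul]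
    · intro i _
      apply ii_bdd _ _ _ (a i * C) (Measurable.ite measurableSet_Iio (by fun_prop) measurable_const)
      intro s hs
      have h1 := hC s (Set.uIoc_subset_uIcc hs)
      rw [Real.norm_eq_abs] at h1
      have h2 : 0 ≤ a i * C := mul_nonneg (ha i) ((abs_nonneg _).trans h1)
      split_ifs
      · rw [abs_mul, abs_of_nonneg (ha i)]; exact mul_le_mul_of_nonneg_left h1 (ha i)
      · rw [abs_zero]; exact h2
  have k1 := key (fun s => V - κ * s ^ 2) (by fun_prop)
  have k2 : ∑ i, a i * ∫ s in (0:ℝ)..lam i, (V - κ * s ^ 2) = V * ρ - κ / 3 * ∑ i, a i * lam i ^ 3 := by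
    rw [hρ, Finset.mul_sum, Finset.mul_sum, ← Finset.sum_sub_distrib]
    refine Finset.sum_congr rfl fun i _ => ?_
    rw [intervalIntegral.integral_sub (by simp) (Continuous.intervalIntegrable (by fun_prop) _ _),
      intervalIntegral.integral_const_mul κ (fun s => s ^ 2), integral_pow, intervalIntegral.integral_const,
      smul_eq_mul]
    push_cast
    ring
  rw [k2] at k1
  have k3 : ∫ s in (0:ℝ)..S, stepF a lam s * (V - κ * s ^ 2) ≤
      ∫ s in (0:ℝ)..S, (η * stepF a lam s ^ 3 + 2 / (3 * √(3 * η)) * (√(V - κ * s ^ 2)) ^ 3) := by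
    apply intervalIntegral.integral_mono hS
    · obtain ⟨C, hC⟩ := (isCompact_uIcc (a := (0:ℝ)) (b := S)).exists_bound_of_continuousOn
        (f := fun s : ℝ => V - κ * s ^ 2) (Continuous.continuousOn (by fun_prop))
      apply ii_bdd _ _ _ ((∑ i, a i) * C) (hm.mul (by fun_prop))
      intro s hs
      show |stepF a lam s * (V - κ * s ^ 2)| ≤ _
      rw [abs_mul, abs_of_nonneg (h0 s)]
      exact mul_le_mul (hle s) (hC s (Set.uIoc_subset_uIcc hs)) (abs_nonneg _) ((h0 s).trans (hle s))
    · exact (hI3.const_mul η).add (Continuous.intervalIntegrable (by fun_prop) _ _)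
    · intro s
      exact young3 _ _ η (h0 s) hη
  rw [k1, intervalIntegral.integral_add (hI3.const_mul η) (Continuous.intervalIntegrable (by fun_prop) _ _),
    intervalIntegral.integral_const_mul, intervalIntegral.integral_const_mul] at k3
  have k4 := mul_le_mul_of_nonneg_left (int_qV V κ S hV0 hκ hS) (by positivity : 0 ≤ 2 / (3 * √(3 * η)))
  have k5 : 2 / (3 * √(3 * η)) * (V ^ 2 / √κ * (3 * π / 16)) = 2 * √3 * m / π * ρ ^ 2 := by
    have : √(3 * η) = √3 * √η := Real.sqrt_mul (by norm_num) _
    have e2 : m = √η * √κ := Real.sqrt_mul hη.le _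
    have a1 : 0 < √η := Real.sqrt_pos.2 hη
    have a2 : 0 < √κ := Real.sqrt_pos.2 hκ
    have a3 : √3 ^ 2 = (3:ℝ) := Real.sq_sqrt (by norm_num)
    rw [hV, this, e2]
    have := Real.pi_pos
    field_simp
    norm_num
  have k6 : V * ρ = 2 * (2 * √3 * m / π * ρ ^ 2) := by rw [hV]; ring
  linarith


lemma gram_one_trace {ι : Type} [Fintype ι] [DecidableEq ι] (u : ι → ℝ → ℂ) (x : ℝ) :
    ((gramM 1 (fun n x (_ : ℝ) => u n x) x) ^ 3).trace.re = (∑ n, ‖u n x‖ ^ 2) ^ 3 := by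
  have e : gramM 1 (fun n x (_ : ℝ) => u n x) x =
      Matrix.vecMulVec (fun n => u n x) (fun n => (starRingEnd ℂ) (u n x)) := by
    ext n m
    simp [gramM, Matrix.vecMulVec_apply]
  have d : (fun n => (starRingEnd ℂ) (u n x)) ⬝ᵥ (fun n => u n x) = ((∑ n, ‖u n x‖ ^ 2 : ℝ) : ℂ) := by
    rw [dotProduct, Complex.ofReal_sum]
    refine Finset.sum_congr rfl fun n _ => ?_
    rw [mul_comm, mul_conj_norm]
  have d' : (fun n => u n x) ⬝ᵥ (fun n => (starRingEnd ℂ) (u n x)) = ((∑ n, ‖u n x‖ ^ 2 : ℝ) : ℂ) := by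
    rw [dotProduct_comm, d]
  rw [e, pow_three, Matrix.vecMulVec_mul_vecMulVec, d, Matrix.vecMulVec_mul_vecMulVec, d]
  rw [Matrix.trace_vecMulVec, dotProduct_smul, dotProduct_smul, d', smul_eq_mul, smul_eq_mul]
  rw [← Complex.ofReal_mul, ← Complex.ofReal_mul, Complex.ofReal_re]
  ring

lemma sum_sub_ite {ι : Type} [Fintype ι] (P : ι → Prop) [DecidablePred P] (f : ι → ℝ) :
    ∑ i : {i // P i}, f i.1 = ∑ i, if P i then f i else 0 := by
  rw [← Finset.sum_filter]
  exact (Finset.sum_subtype _ (by simp) f).symm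

lemma slice {ι : Type} [Fintype ι] [DecidableEq ι] (K α L : ℝ) (hLT : LT1D K α L)
    (w w' : ι → ℝ → ℂ) (hw : ∀ i, Continuous (w i)) (hw' : ∀ i, Continuous (w' i))
    (hd : ∀ i y, HasDerivAt (w i) (w' i y) y)
    (hq : ∀ i y, w i (y + L) = Complex.exp ((2 * π * α : ℝ) * Complex.I) * w i y)
    (lam : ι → ℝ)
    (ho : ∀ i j, ∫ y in (0:ℝ)..L, w i y * (starRingEnd ℂ) (w j y) = if i = j then (lam i : ℂ) else 0)
    (s : ℝ) (hs : 0 ≤ s) :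
    ∫ y in (0:ℝ)..L, stepF (fun i => ‖w i y‖ ^ 2 / lam i) lam s ^ 3 ≤
      K * ∑ i, if s < lam i then (∫ y in (0:ℝ)..L, ‖w' i y‖ ^ 2) / lam i else 0 := by
  classical
  have hpos : ∀ i : {i // s < lam i}, 0 < lam i.1 := fun i => hs.trans_lt i.2
  have hn : ∀ i : {i // s < lam i}, ∀ z : ℂ, ‖((√(lam i.1) : ℝ) : ℂ)⁻¹ * z‖ ^ 2 = ‖z‖ ^ 2 / lam i.1 := by
    intro i z
    rw [norm_mul, norm_inv, Complex.norm_real, mul_pow, inv_pow, Real.norm_eq_abs, sq_abs,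
      Real.sq_sqrt (hpos i).le]
    ring
  have h := hLT {i // s < lam i} 1 one_pos
    (fun i y _ => ((√(lam i.1) : ℝ) : ℂ)⁻¹ * w i.1 y) (fun i y _ => ((√(lam i.1) : ℝ) : ℂ)⁻¹ * w' i.1 y)
    (fun i => by have := hw i.1; fun_prop) (fun i => by have := hw' i.1; fun_prop)
    (fun i y _ => (hd i.1 y).const_mul _)
    (fun i y _ => by rw [hq]; ring) ?_
  · simp_rw [gram_one_trace (fun (i : {i // s < lam i}) y => ((√(lam i.1) : ℝ) : ℂ)⁻¹ * w i.1 y), hn] at h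
    simp only [intervalIntegral.integral_const, sub_zero, one_smul, intervalIntegral.integral_div] at h
    rw [sum_sub_ite (fun i => s < lam i) (fun i => (∫ y in (0:ℝ)..L, ‖w' i y‖ ^ 2) / lam i)] at h
    convert h using 4 with y
    unfold stepF
    rw [sum_sub_ite (fun i => s < lam i) (fun i => ‖w i y‖ ^ 2 / lam i)]
  · intro i j
    simp only [intervalIntegral.integral_const, sub_zero, one_smul, map_mul, map_inv₀, Complex.conj_ofReal]
    have e : ∀ y, ((√(lam i.1) : ℝ) : ℂ)⁻¹ * w i.1 y * (((√(lam j.1) : ℝ) : ℂ)⁻¹ * (starRingEnd ℂ) (w j.1 y)) =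
      (((√(lam i.1) : ℝ) : ℂ)⁻¹ * ((√(lam j.1) : ℝ) : ℂ)⁻¹) * (w i.1 y * (starRingEnd ℂ) (w j.1 y)) := fun y => by ring
    simp_rw [e]
    rw [intervalIntegral.integral_const_mul, ho]
    by_cases hij : i = j
    · subst hij
      have : √(lam i.1) ≠ 0 := (Real.sqrt_pos.2 (hpos i)).ne'
      have h2 : √(lam i.1) * √(lam i.1) = lam i.1 := Real.mul_self_sqrt (hpos i).le
      simp only [if_true]
      rw [← mul_inv, ← Complex.ofReal_mul, h2]
      have : (lam i.1 : ℂ) ≠ 0 := by exact_mod_cast (hpos i).ne'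
      field_simp
    · have : i.1 ≠ j.1 := fun h => hij (Subtype.ext h)
      simp [hij, this]

lemma zero_of_int (f : ℝ → ℝ) (hf : Continuous f) (h0 : ∀ x, 0 ≤ f x) (L : ℝ) (hL : 0 < L)
    (h : ∫ x in (0:ℝ)..L, f x = 0) : ∀ x ∈ Set.Icc 0 L, f x = 0 := by
  by_contra! hc
  obtain ⟨x, hx, hne⟩ := hc
  have := intervalIntegral.integral_pos hL hf.continuousOn (fun x _ => h0 x)
    ⟨x, hx, lt_of_le_of_ne (h0 x) hne.symm⟩
  linarith

lemma lift1 {ι : Type} [Fintype ι] [DecidableEq ι] (K α L : ℝ) (hL : 0 < L) (hK : 0 ≤ K) (hLT : LT1D K α L)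
    (w w' : ι → ℝ → ℂ) (hw : ∀ i, Continuous (w i)) (hw' : ∀ i, Continuous (w' i))
    (hd : ∀ i y, HasDerivAt (w i) (w' i y) y)
    (hq : ∀ i y, w i (y + L) = Complex.exp ((2 * π * α : ℝ) * Complex.I) * w i y)
    (lam : ι → ℝ) (hl : ∀ i, 0 ≤ lam i)
    (ho : ∀ i j, ∫ y in (0:ℝ)..L, w i y * (starRingEnd ℂ) (w j y) = if i = j then (lam i : ℂ) else 0)
    (hn : ∀ i, ∫ y in (0:ℝ)..L, ‖w i y‖ ^ 2 = lam i)
    (η κ : ℝ) (hη : 0 < η) (hκ : 0 < κ) :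
    2 * √3 * √(η * κ) / π * ∫ y in (0:ℝ)..L, (∑ i, ‖w i y‖ ^ 2) ^ 2 ≤
      η * K * (∑ i, ∫ y in (0:ℝ)..L, ‖w' i y‖ ^ 2) + κ / 3 * ∑ i, lam i ^ 3 := by
  set S := ∑ i, lam i with hS
  have hS0 : 0 ≤ S := Finset.sum_nonneg fun i _ => hl i
  have hlS : ∀ i, lam i ≤ S := fun i => Finset.single_le_sum (f := lam) (fun j _ => hl j) (Finset.mem_univ i)
  set b : ℝ → ι → ℝ := fun y i => ‖w i y‖ ^ 2 / lam i with hb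
  have hb0 : ∀ y i, 0 ≤ b y i := fun y i => div_nonneg (by positivity) (hl i)
  have hbc : ∀ i, Continuous fun y => b y i := fun i => by have := hw i; simp only [hb]; fun_prop
  have hbl : ∀ y ∈ Set.Icc 0 L, ∀ i, b y i * lam i = ‖w i y‖ ^ 2 := by
    intro y hy i
    rcases (hl i).eq_or_lt with h | h
    · have h2 := hn i
      rw [← h] at h2
      have := zero_of_int (fun y => ‖w i y‖ ^ 2) (by have := hw i; fun_prop) (fun _ => by positivity) L hL h2 y hy
      rw [show ‖w i y‖ ^ 2 = 0 from this, ← h, mul_zero]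
    · simp only [hb]; field_simp
  have hlay : ∀ y ∈ Set.Icc 0 L, 2 * √3 * √(η * κ) / π * (∑ i, ‖w i y‖ ^ 2) ^ 2 ≤
      η * (∫ s in (0:ℝ)..S, stepF (b y) lam s ^ 3) + κ / 3 * ∑ i, ‖w i y‖ ^ 2 * lam i ^ 2 := by
    intro y hy
    have := layer (b y) lam (hb0 y) hl S hS0 hlS η κ hη hκ
    have e : ∀ i, b y i * lam i ^ 3 = ‖w i y‖ ^ 2 * lam i ^ 2 := by
      intro i; rw [← hbl y hy i]; ring
    simp_rw [hbl y hy, e] at this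
    exact this
  have hmeas : Measurable (Function.uncurry fun y s => stepF (b y) lam s ^ 3) := by
    unfold stepF
    refine Measurable.pow_const (Finset.measurable_sum _ fun i _ => ?_) 3
    exact Measurable.ite (measurableSet_lt measurable_snd measurable_const)
      ((hbc i).measurable.comp measurable_fst) measurable_const
  obtain ⟨C, hC⟩ := (isCompact_uIcc (a := (0:ℝ)) (b := L)).exists_bound_of_continuousOn
    (f := fun y => ∑ i, b y i) (continuous_finsetSum _ fun i _ => hbc i).continuousOn
  have hbd : ∀ y ∈ Set.uIoc 0 L, ∀ s, |stepF (b y) lam s ^ 3| ≤ C ^ 3 := by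
    intro y hy s
    have h0 := stepF_nonneg (b y) lam (hb0 y) s
    rw [abs_of_nonneg (pow_nonneg h0 3)]
    refine pow_le_pow_left₀ h0 ((stepF_le (b y) lam (hb0 y) s).trans ?_) 3
    exact (le_abs_self _).trans (hC y (Set.uIoc_subset_uIcc hy))
  have hsw := swap_bdd (fun y s => stepF (b y) lam s ^ 3) hmeas 0 L 0 S (C ^ 3) (fun y hy s _ => hbd y hy s)
  have hinn : IntervalIntegrable (fun y => ∫ s in (0:ℝ)..S, stepF (b y) lam s ^ 3) volume 0 L := by
    apply ii_bdd _ _ _ (C ^ 3 * |S - 0|)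
    · simp_rw [intervalIntegral.integral_of_le hS0]
      exact (hmeas.stronglyMeasurable.integral_prod_right').measurable
    · intro y hy
      exact intervalIntegral.norm_integral_le_of_norm_le_const (f := fun s => stepF (b y) lam s ^ 3)
        fun s _ => hbd y hy s
  have h1 := intervalIntegral.integral_mono_on hL.le (Continuous.intervalIntegrable (by fun_prop) _ _)
    ((hinn.const_mul η).add (Continuous.intervalIntegrable
      (u := fun y => κ / 3 * ∑ i, ‖w i y‖ ^ 2 * lam i ^ 2) (by fun_prop) 0 L)) hlay
  rw [intervalIntegral.integral_const_mul, intervalIntegral.integral_add (hinn.const_mul η)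
    (Continuous.intervalIntegrable (by fun_prop) _ _), intervalIntegral.integral_const_mul,
    intervalIntegral.integral_const_mul, intervalIntegral.integral_finsetSum
      (fun i _ => Continuous.intervalIntegrable (by fun_prop) _ _)] at h1
  have e3 : ∀ i, ∫ y in (0:ℝ)..L, ‖w i y‖ ^ 2 * lam i ^ 2 = lam i ^ 3 := by
    intro i; rw [intervalIntegral.integral_mul_const, hn]; ring
  simp_rw [e3] at h1
  have h2 : ∫ s in (0:ℝ)..S, ∫ y in (0:ℝ)..L, stepF (b y) lam s ^ 3 ≤
      K * ∑ i, ∫ y in (0:ℝ)..L, ‖w' i y‖ ^ 2 := by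
    set T : ι → ℝ := fun i => ∫ y in (0:ℝ)..L, ‖w' i y‖ ^ 2 with hT
    have hT0 : ∀ i, 0 ≤ T i := fun i => intervalIntegral.integral_nonneg hL.le fun y _ => by positivity
    have hgi : ∀ i, IntervalIntegrable (fun s => if s < lam i then T i / lam i else 0) volume 0 S := by
      intro i
      apply ii_bdd _ _ _ (T i / lam i) (Measurable.ite measurableSet_Iio measurable_const measurable_const)
      intro s _
      have := div_nonneg (hT0 i) (hl i)
      split_ifs
      · rw [abs_of_nonneg this]
      · rw [abs_zero]; exact this
    have h3 := imono (fun s => ∫ y in (0:ℝ)..L, stepF (b y) lam s ^ 3)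
      (fun s => K * ∑ i, if s < lam i then T i / lam i else 0) 0 S hS0
      (fun s _ => intervalIntegral.integral_nonneg hL.le fun y _ => pow_nonneg (stepF_nonneg _ _ (hb0 y) s) 3)
      (IntervalIntegrable.const_mul (by
        have := IntervalIntegrable.sum Finset.univ (fun i _ => hgi i)
        have e : (fun s => ∑ i, if s < lam i then T i / lam i else 0) =
            ∑ i, fun s => if s < lam i then T i / lam i else 0 := by
          funext s; simp
        rw [e]; exact this) K)
      (fun s hs => slice K α L hLT w w' hw hw' hd hq lam ho s hs.1.le)
    refine h3.trans ?_
    rw [intervalIntegral.integral_const_mul]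
    refine mul_le_mul_of_nonneg_left ?_ hK
    rw [intervalIntegral.integral_finsetSum (fun i _ => hgi i)]
    refine Finset.sum_le_sum fun i _ => ?_
    rw [int_chi (fun _ => T i / lam i) continuous_const (lam i) S (hl i) (hlS i)]
    rw [intervalIntegral.integral_const, smul_eq_mul, sub_zero]
    rcases (hl i).eq_or_lt with h | h
    · rw [← h]; simpa using hT0 i
    · apply le_of_eq
      show lam i * (T i / lam i) = T i
      field_simp
  rw [hsw] at h1
  have h4 := mul_le_mul_of_nonneg_left h2 hη.le
  linarith


lemma lt2d {ι : Type} [Fintype ι] [DecidableEq ι] (α₁ α₂ L M K₁ K₂ : ℝ) (hL : 0 < L) (hM : 0 < M)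
    (hK₁ : 0 < K₁) (hK₂ : 0 < K₂) (h₁ : LT1D K₁ α₁ L) (h₂ : LT1D K₂ α₂ M)
    (v v1 v2 : ι → ℝ → ℝ → ℂ)
    (hv : ∀ n, Continuous (fun p : ℝ × ℝ => v n p.1 p.2))
    (hv1 : ∀ n, Continuous (fun p : ℝ × ℝ => v1 n p.1 p.2))
    (hv2 : ∀ n, Continuous (fun p : ℝ × ℝ => v2 n p.1 p.2))
    (hd1 : ∀ n x y, HasDerivAt (fun x => v n x y) (v1 n x y) x)
    (hd2 : ∀ n x y, HasDerivAt (fun y => v n x y) (v2 n x y) y)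
    (hq1 : ∀ n x y, v n (x + L) y = Complex.exp ((2 * π * α₁ : ℝ) * Complex.I) * v n x y)
    (hq2 : ∀ n x y, v n x (y + M) = Complex.exp ((2 * π * α₂ : ℝ) * Complex.I) * v n x y)
    (ho : ∀ n m, ∫ x in (0:ℝ)..L, ∫ y in (0:ℝ)..M, v n x y * (starRingEnd ℂ) (v m x y)
      = if n = m then 1 else 0) :
    ∫ x in (0:ℝ)..L, ∫ y in (0:ℝ)..M, (∑ n, ‖v n x y‖ ^ 2) ^ 2 ≤
      π / 6 * √(K₁ * K₂) * (∑ n, ((∫ x in (0:ℝ)..L, ∫ y in (0:ℝ)..M, ‖v1 n x y‖ ^ 2) +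
        ∫ x in (0:ℝ)..L, ∫ y in (0:ℝ)..M, ‖v2 n x y‖ ^ 2)) := by
  have hη : 0 < 1 / K₂ := by positivity
  have hκ : 0 < 3 / K₁ := by positivity
  have hsl : ∀ n x, Continuous (v n x) := fun n x =>
    (hv n).comp (f := fun y : ℝ => (x, y)) (by fun_prop)
  have hsl2 : ∀ n x, Continuous (v2 n x) := fun n x =>
    (hv2 n).comp (f := fun y : ℝ => (x, y)) (by fun_prop)
  have hpt : ∀ x, 2 * √3 * √(1 / K₂ * (3 / K₁)) / π * ∫ y in (0:ℝ)..M, (∑ n, ‖v n x y‖ ^ 2) ^ 2 ≤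
      (∑ n, ∫ y in (0:ℝ)..M, ‖v2 n x y‖ ^ 2) + 1 / K₁ * ((gramM M v x) ^ 3).trace.re := by
    intro x
    obtain ⟨V, lam, hV1, hV2, -, htr, horth, hnorm, hlam⟩ := gram_diag M hM v hv x
    have h := lift1 K₂ α₂ M hM hK₂.le h₂ (fun i y => rot V (fun n => v n x y) i)
      (fun i y => rot V (fun n => v2 n x y) i)
      (fun i => rot_cont V (fun n y => v n x y) (fun n => hsl n x) i)
      (fun i => rot_cont V (fun n y => v2 n x y) (fun n => hsl2 n x) i)
      (fun i y => by
        unfold rot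
        exact HasDerivAt.fun_sum fun n _ => (hd2 n x y).const_mul _)
      (fun i y => by
        unfold rot
        rw [Finset.mul_sum]
        refine Finset.sum_congr rfl fun n _ => ?_
        simp only [hq2]; ring)
      lam hlam horth hnorm _ _ hη hκ
    simp_rw [rot_norm V hV1] at h
    rw [← htr] at h
    have e : ∑ i, ∫ y in (0:ℝ)..M, ‖rot V (fun n => v2 n x y) i‖ ^ 2 = ∑ n, ∫ y in (0:ℝ)..M, ‖v2 n x y‖ ^ 2 := by
      rw [← intervalIntegral.integral_finsetSum, ← intervalIntegral.integral_finsetSum]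
      · simp_rw [rot_norm V hV1]
      · intro n _
        have := hsl2 n x
        exact Continuous.intervalIntegrable (by fun_prop) _ _
      · intro i _
        have := rot_cont V (fun n y => v2 n x y) (fun n => hsl2 n x) i
        exact Continuous.intervalIntegrable (by fun_prop) _ _
    rw [e] at h
    have e1 : 1 / K₂ * K₂ = 1 := by field_simp
    have e2 : 3 / K₁ / 3 = 1 / K₁ := by field_simp
    rw [e1, e2, one_mul] at h
    exact h
  have hc1 : Continuous fun x => ∫ y in (0:ℝ)..M, (∑ n, ‖v n x y‖ ^ 2) ^ 2 :=
    cont_int _ (by fun_prop) _ _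
  have hc2 : ∀ n, Continuous fun x => ∫ y in (0:ℝ)..M, ‖v2 n x y‖ ^ 2 := fun n =>
    cont_int _ (by have := hv2 n; fun_prop) _ _
  have hc3 := trace_gram_cont M v hv
  have hI := intervalIntegral.integral_mono (μ := volume)
    (f := fun x => 2 * √3 * √(1 / K₂ * (3 / K₁)) / π * ∫ y in (0:ℝ)..M, (∑ n, ‖v n x y‖ ^ 2) ^ 2)
    (g := fun x => (∑ n, ∫ y in (0:ℝ)..M, ‖v2 n x y‖ ^ 2) + 1 / K₁ * ((gramM M v x) ^ 3).trace.re) hL.le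
    ((hc1.const_mul (2 * √3 * √(1 / K₂ * (3 / K₁)) / π)).intervalIntegrable 0 L)
    (((continuous_finsetSum _ fun n _ => hc2 n).add (hc3.const_mul (1 / K₁))).intervalIntegrable 0 L) hpt
  rw [intervalIntegral.integral_const_mul, intervalIntegral.integral_add
    ((continuous_finsetSum _ fun n _ => hc2 n).intervalIntegrable 0 L) ((hc3.const_mul (1 / K₁)).intervalIntegrable 0 L),
    intervalIntegral.integral_finsetSum fun n _ => (hc2 n).intervalIntegrable 0 L,
    intervalIntegral.integral_const_mul] at hI
  have hF := h₁ ι M hM v v1 hv hv1 hd1 hq1 ho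
  have hF2 := mul_le_mul_of_nonneg_left hF (by positivity : 0 ≤ 1 / K₁)
  rw [← mul_assoc, show 1 / K₁ * K₁ = 1 by field_simp, one_mul] at hF2
  rw [Finset.sum_add_distrib]
  set E1 := ∑ n, ∫ x in (0:ℝ)..L, ∫ y in (0:ℝ)..M, ‖v1 n x y‖ ^ 2
  set E2 := ∑ n, ∫ x in (0:ℝ)..L, ∫ y in (0:ℝ)..M, ‖v2 n x y‖ ^ 2
  set R := ∫ x in (0:ℝ)..L, ∫ y in (0:ℝ)..M, (∑ n, ‖v n x y‖ ^ 2) ^ 2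
  have hs : 0 < √(K₁ * K₂) := Real.sqrt_pos.2 (by positivity)
  have hc : 2 * √3 * √(1 / K₂ * (3 / K₁)) / π = 6 / (π * √(K₁ * K₂)) := by
    have e : 1 / K₂ * (3 / K₁) = 3 / (K₁ * K₂) := by field_simp
    have a3 : √3 * √3 = (3:ℝ) := Real.mul_self_sqrt (by norm_num)
    rw [e, Real.sqrt_div (by norm_num)]
    have := Real.pi_pos
    field_simp
    nlinarith
  rw [hc] at hI
  have hle : 6 / (π * √(K₁ * K₂)) * R ≤ E1 + E2 := by linarith
  have hp := Real.pi_pos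
  have := mul_le_mul_of_nonneg_left hle (by positivity : 0 ≤ π / 6 * √(K₁ * K₂))
  have e : π / 6 * √(K₁ * K₂) * (6 / (π * √(K₁ * K₂)) * R) = R := by field_simp
  rwa [e] at this

lemma box_int {E : Type*} [NormedAddCommGroup E] [NormedSpace ℝ E] (f : (Fin 2 → ℝ) → E) (hf : Continuous f)
    (Lp : Fin 2 → ℝ) (hLp : ∀ j, 0 < Lp j) :
    ∫ x in Set.univ.pi (fun j => Set.Ioc 0 (Lp j)), f x =
      ∫ x in (0:ℝ)..Lp 0, ∫ y in (0:ℝ)..Lp 1, f ![x, y] := by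
  have hmp := (volume_preserving_finTwoArrow ℝ).symm
  have h := hmp.setIntegral_preimage_emb (MeasurableEquiv.finTwoArrow (α := ℝ)).symm.measurableEmbedding f
    (Set.univ.pi (fun j => Set.Ioc 0 (Lp j)))
  rw [← h]
  have e : (MeasurableEquiv.finTwoArrow (α := ℝ)).symm ⁻¹' (Set.univ.pi (fun j => Set.Ioc 0 (Lp j))) =
      Set.Ioc 0 (Lp 0) ×ˢ Set.Ioc 0 (Lp 1) := by
    ext p
    simp [Set.mem_pi, Fin.forall_fin_two, MeasurableEquiv.finTwoArrow, MeasurableEquiv.piFinTwo]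
  rw [e]
  have e2 : ∀ p : ℝ × ℝ, (MeasurableEquiv.finTwoArrow (α := ℝ)).symm p = ![p.1, p.2] := by
    intro p
    ext i
    fin_cases i <;> simp [MeasurableEquiv.finTwoArrow, MeasurableEquiv.piFinTwo]
  simp_rw [e2]
  have hc : Continuous fun p : ℝ × ℝ => f ![p.1, p.2] := by
    refine hf.comp (f := fun p : ℝ × ℝ => ![p.1, p.2]) ?_
    refine continuous_pi fun i => ?_
    fin_cases i
    · exact continuous_fst
    · exact continuous_snd
  rw [Measure.volume_eq_prod, setIntegral_prod]
  · rw [intervalIntegral.integral_of_le (hLp 0).le]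
    simp_rw [intervalIntegral.integral_of_le (hLp 1).le]
  · exact (hc.continuousOn.integrableOn_compact (isCompact_Icc.prod isCompact_Icc)).mono_set
      (Set.prod_mono Set.Ioc_subset_Icc_self Set.Ioc_subset_Icc_self)


/-- The gauge phase. -/
noncomputable def gph (a : Fin 2 → ℝ → ℝ) (x y : ℝ) : ℂ :=
  Complex.exp (((∫ t in (0:ℝ)..x, a 0 t) + ∫ t in (0:ℝ)..y, a 1 t : ℝ) * Complex.I)

lemma gph_norm (a : Fin 2 → ℝ → ℝ) (x y : ℝ) : ‖gph a x y‖ = 1 := by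
  unfold gph
  exact Complex.norm_exp_ofReal_mul_I _

lemma prim_cont (f : ℝ → ℝ) (hf : Continuous f) : Continuous fun x => ∫ t in (0:ℝ)..x, f t :=
  continuous_iff_continuousAt.2 fun x =>
    (intervalIntegral.integral_hasDerivAt_right (hf.intervalIntegrable _ _)
      hf.aestronglyMeasurable.stronglyMeasurableAtFilter hf.continuousAt).continuousAt

lemma gph_cont (a : Fin 2 → ℝ → ℝ) (ha : ∀ j, Continuous (a j)) :
    Continuous fun p : ℝ × ℝ => gph a p.1 p.2 := by
  have h0 := prim_cont _ (ha 0)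
  have h1 := prim_cont _ (ha 1)
  unfold gph
  have e : Continuous fun p : ℝ × ℝ => (∫ t in (0:ℝ)..p.1, a 0 t) + ∫ t in (0:ℝ)..p.2, a 1 t :=
    (h0.comp continuous_fst).add (h1.comp continuous_snd)
  exact Complex.continuous_exp.comp ((Complex.continuous_ofReal.comp e).mul continuous_const)

lemma gph_d1 (a : Fin 2 → ℝ → ℝ) (ha : ∀ j, Continuous (a j)) (x y : ℝ) :
    HasDerivAt (fun x => gph a x y) (gph a x y * ((a 0 x : ℝ) * Complex.I)) x := by
  have h : HasDerivAt (fun x => (∫ t in (0:ℝ)..x, a 0 t) + ∫ t in (0:ℝ)..y, a 1 t) (a 0 x) x :=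
    (intervalIntegral.integral_hasDerivAt_right ((ha 0).intervalIntegrable _ _)
      (ha 0).aestronglyMeasurable.stronglyMeasurableAtFilter (ha 0).continuousAt).add_const _
  exact (h.ofReal_comp.mul_const Complex.I).cexp

lemma gph_d2 (a : Fin 2 → ℝ → ℝ) (ha : ∀ j, Continuous (a j)) (x y : ℝ) :
    HasDerivAt (fun y => gph a x y) (gph a x y * ((a 1 y : ℝ) * Complex.I)) y := by
  have h : HasDerivAt (fun y => (∫ t in (0:ℝ)..x, a 0 t) + ∫ t in (0:ℝ)..y, a 1 t) (a 1 y) y :=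
    (intervalIntegral.integral_hasDerivAt_right ((ha 1).intervalIntegrable _ _)
      (ha 1).aestronglyMeasurable.stronglyMeasurableAtFilter (ha 1).continuousAt).const_add _
  exact (h.ofReal_comp.mul_const Complex.I).cexp

lemma prim_per (f : ℝ → ℝ) (hf : Continuous f) (L : ℝ) (hp : Function.Periodic f L) (x : ℝ) :
    ∫ t in (0:ℝ)..(x + L), f t = (∫ t in (0:ℝ)..L, f t) + ∫ t in (0:ℝ)..x, f t := by
  rw [← intervalIntegral.integral_add_adjacent_intervals (hf.intervalIntegrable 0 x) (hf.intervalIntegrable x (x + L)),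
    hp.intervalIntegral_add_eq x 0, zero_add, add_comm]

lemma vec_cont : Continuous fun p : ℝ × ℝ => ![p.1, p.2] := by
  refine continuous_pi fun i => ?_
  fin_cases i
  · exact continuous_fst
  · exact continuous_snd

lemma vec_d1 (x y : ℝ) : HasDerivAt (fun x : ℝ => ![x, y]) (Pi.single 0 1) x := by
  rw [hasDerivAt_pi]
  intro i
  fin_cases i
  · simpa using hasDerivAt_id' x
  · simpa using hasDerivAt_const x y

lemma vec_d2 (x y : ℝ) : HasDerivAt (fun y : ℝ => ![x, y]) (Pi.single 1 1) y := by
  rw [hasDerivAt_pi]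
  intro i
  fin_cases i
  · simpa using hasDerivAt_const y x
  · simpa using hasDerivAt_id' y

lemma magOp_cont (a : Fin 2 → ℝ → ℝ) (ha : ∀ j, Continuous (a j)) (j : Fin 2) (f : (Fin 2 → ℝ) → ℂ)
    (hf : ContDiff ℝ 1 f) : Continuous (magOp a j f) := by
  have h1 := hf.continuous_fderiv (by norm_num)
  have h2 := hf.continuous
  have h3 : Continuous fun x : Fin 2 → ℝ => a j (x j) := (ha j).comp (continuous_apply j)
  unfold magOp
  exact (continuous_const.mul (h1.clm_apply continuous_const)).sub ((Complex.continuous_ofReal.comp h3).mul h2)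

/-- Lieb–Thirring inequality for orthonormal systems on the 2D torus. -/
theorem lieb_thirring_orthonormal_torus2
    (Lp : Fin 2 → ℝ) (hLp : ∀ j, 0 < Lp j)
    (a : Fin 2 → ℝ → ℝ) (ha : ∀ j, Continuous (a j))
    (haP : ∀ j, Function.Periodic (a j) (Lp j))
    (α : Fin 2 → ℝ) (hα : ∀ j, α j = (1 / (2 * Real.pi)) * ∫ x in (0:ℝ)..(Lp j), a j x)
    (hαZ : ∀ j, ∀ m : ℤ, α j ≠ (m : ℝ))
    (N : ℕ) (ψ : Fin N → (Fin 2 → ℝ) → ℂ)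
    (hψ : ∀ n, ContDiff ℝ 1 (ψ n))
    (hψP : ∀ n (j : Fin 2) (x : Fin 2 → ℝ), ψ n (x + Pi.single j (Lp j)) = ψ n x)
    (horth : ∀ n m, ∫ x in Set.univ.pi (fun j => Set.Ioc 0 (Lp j)),
        ψ n x * (starRingEnd ℂ) (ψ m x) = if n = m then 1 else 0) :
    ∫ x in Set.univ.pi (fun j => Set.Ioc 0 (Lp j)), (∑ n, ‖ψ n x‖ ^ 2) ^ 2 ≤
      (Real.pi / 6) * Real.sqrt (Kmin (α 0) * Kmin (α 1)) *
        ∑ n, ∫ x in Set.univ.pi (fun j => Set.Ioc 0 (Lp j)),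
          ∑ j, ‖magOp a j (ψ n) x‖ ^ 2 := by
  have hc : ∀ n, Continuous (ψ n) := fun n => (hψ n).continuous
  have hmc : ∀ j n, Continuous (magOp a j (ψ n)) := fun j n => magOp_cont a ha j (ψ n) (hψ n)
  have hflux : ∀ j, ∫ x in (0:ℝ)..(Lp j), a j x = 2 * π * α j := by
    intro j
    have := Real.pi_pos
    rw [hα j]; field_simp
  have hdd : ∀ n x, HasFDerivAt (ψ n) (fderiv ℝ (ψ n) x) x := fun n x =>
    ((hψ n).differentiable (by norm_num) x).hasFDerivAt
  have hv0 : ∀ (f : (Fin 2 → ℝ) → ℂ), Continuous f → Continuous fun p : ℝ × ℝ => gph a p.1 p.2 * f ![p.1, p.2] :=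
    fun f hf => (gph_cont a ha).mul (hf.comp vec_cont)
  have main := lt2d (ι := Fin N) (α 0) (α 1) (Lp 0) (Lp 1) (Kmin (α 0)) (Kmin (α 1)) (hLp 0) (hLp 1)
    (Kmin_pos _ (hαZ 0)) (Kmin_pos _ (hαZ 1)) (LT1D_min _ _ (hLp 0) (hαZ 0)) (LT1D_min _ _ (hLp 1) (hαZ 1))
    (fun n x y => gph a x y * ψ n ![x, y])
    (fun n x y => gph a x y * (-Complex.I * magOp a 0 (ψ n) ![x, y]))
    (fun n x y => gph a x y * (-Complex.I * magOp a 1 (ψ n) ![x, y]))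
    (fun n => hv0 _ (hc n))
    (fun n => hv0 (fun z => -Complex.I * magOp a 0 (ψ n) z) (continuous_const.mul (hmc 0 n)))
    (fun n => hv0 (fun z => -Complex.I * magOp a 1 (ψ n) z) (continuous_const.mul (hmc 1 n)))
    (fun n x y => by
      have h := (gph_d1 a ha x y).mul ((hdd n ![x, y]).comp_hasDerivAt x (vec_d1 x y))
      refine h.congr_deriv ?_
      unfold magOp
      simp only [Matrix.cons_val_zero, Function.comp]
      linear_combination ((gph a x y) * (fderiv ℝ (ψ n) ![x, y]) (Pi.single 0 1)) * Complex.I_sq)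
    (fun n x y => by
      have h := (gph_d2 a ha x y).mul ((hdd n ![x, y]).comp_hasDerivAt y (vec_d2 x y))
      refine h.congr_deriv ?_
      unfold magOp
      simp only [Matrix.cons_val_one, Matrix.cons_val_zero, Function.comp]
      linear_combination ((gph a x y) * (fderiv ℝ (ψ n) ![x, y]) (Pi.single 1 1)) * Complex.I_sq)
    (fun n x y => by
      have e : ψ n ![x + Lp 0, y] = ψ n ![x, y] := by
        rw [← hψP n 0 ![x, y]]
        congr 1
        ext i; fin_cases i <;> simp
      rw [e, ← mul_assoc]
      congr 1
      unfold gph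
      rw [prim_per _ (ha 0) _ (haP 0), hflux, ← Complex.exp_add]
      congr 1
      push_cast; ring)
    (fun n x y => by
      have e : ψ n ![x, y + Lp 1] = ψ n ![x, y] := by
        rw [← hψP n 1 ![x, y]]
        congr 1
        ext i; fin_cases i <;> simp
      rw [e, ← mul_assoc]
      congr 1
      unfold gph
      rw [prim_per _ (ha 1) _ (haP 1), hflux, ← Complex.exp_add]
      congr 1
      push_cast; ring)
    (fun n m => by
      rw [← horth n m, box_int (fun x => ψ n x * (starRingEnd ℂ) (ψ m x)) ((hc n).mul (Complex.continuous_conj.comp (hc m))) Lp hLp]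
      have e : ∀ x y, gph a x y * ψ n ![x, y] * (starRingEnd ℂ) (gph a x y * ψ m ![x, y]) =
          ψ n ![x, y] * (starRingEnd ℂ) (ψ m ![x, y]) := by
        intro x y
        have h1 := mul_conj_norm (gph a x y)
        rw [gph_norm] at h1
        norm_num at h1
        rw [map_mul]
        linear_combination (ψ n ![x, y] * (starRingEnd ℂ) (ψ m ![x, y])) * h1
      simp_rw [e])
  simp only [norm_mul, gph_norm, one_mul, norm_neg, Complex.norm_I] at main
  rw [box_int _ (by fun_prop) Lp hLp]
  refine main.trans (le_of_eq ?_)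
  congr 1
  refine Finset.sum_congr rfl fun n _ => ?_
  have b0 : ∀ j, Continuous fun x => ‖magOp a j (ψ n) x‖ ^ 2 := fun j => by have := hmc j n; fun_prop
  rw [← box_int (fun x => ‖magOp a 0 (ψ n) x‖ ^ 2) (b0 0) Lp hLp,
    ← box_int (fun x => ‖magOp a 1 (ψ n) x‖ ^ 2) (b0 1) Lp hLp, ← integral_add]
  · simp_rw [Fin.sum_univ_two]
  all_goals
    refine ((b0 _).continuousOn.integrableOn_compact
      (isCompact_univ_pi fun j => isCompact_Icc (a := 0) (b := Lp j))).mono_set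
      (Set.pi_mono fun j _ => Set.Ioc_subset_Icc_self)
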